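/- Let p ≥ 1 be a real number, ω > 0, and fix any constant α with 0 < α < 1. Suppose k : ℝ × [0, ω) → ℝ is a smooth function, 2π-periodic in its first (angular) variable θ, with k(θ,t) > 0 everywhere, satisfying the general curve shortening equation ∂k/∂t = k²·(∂²(k^p)/∂θ² + k^p) on ℝ × (0, ω), and suppose that sup_θ |k(θ,t)·((p+1)(ω−t))^{1/(p+1)} − 1| → 0 as t → ω⁻. Then for each integer l ≥ 1 there exists a positive constant C(l,p), depending only on l, p and the initial data k(·,0), such that for all t ∈ [0, ω): sup_θ |∂^l k/∂θ^l (θ,t)| ≤ C(l,p)·(ω−t)^{2αp/(p+1) − 1/(p+1)}. -/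

import Mathlib

open Real Filter Set

/-!
Multiplying the curvature by the radius of the shrinking circle gives a rescaled speed
`u = (K R) ^ p` that tends to `1` and solves a quasilinear parabolic equation with time factor
`1 / (ω - t)`. The evolution equation preserves `∫ cos / K` and `∫ sin / K`, and both vanish in the
limit, so `1 / K` has no first Fourier modes. As `u` is close to `1`, its derivative almost has no
first modes either, and Wirtinger's inequality for `u'` holds with almost the second eigenvalue `4`.
The energy identity for `∫ u' ^ 2` then shows that it is `O((ω - t) ^ s)` for every
`s < 2 (3p - 1) / (p + 1)`. Bernstein's method bounds every derivative of `u` uniformly in time,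
without a rate; by log-convexity in `n` of the `L²` energies of the `n`-th derivatives of `K R`, the
decay passes to all derivatives at an arbitrarily small loss in the exponent.
-/

open scoped Topology

section PartialDerivatives

variable {E : Type*} [NormedAddCommGroup E] [NormedSpace ℝ E]

lemma hasDerivAt_fst_of_differentiableAt {f : ℝ × ℝ → E} {x t : ℝ}
    (hf : DifferentiableAt ℝ f (x, t)) :
    HasDerivAt (fun y => f (y, t)) (fderiv ℝ f (x, t) (1, 0)) x :=
  hf.hasFDerivAt.comp_hasDerivAt x ((hasDerivAt_id x).prodMk (hasDerivAt_const x t))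

lemma hasDerivAt_snd_of_differentiableAt {f : ℝ × ℝ → E} {x t : ℝ}
    (hf : DifferentiableAt ℝ f (x, t)) :
    HasDerivAt (fun s => f (x, s)) (fderiv ℝ f (x, t) (0, 1)) t :=
  hf.hasFDerivAt.comp_hasDerivAt t ((hasDerivAt_const t x).prodMk (hasDerivAt_id t))

lemma fderiv_fderiv_apply_comm {F : Type*} [NormedAddCommGroup F] [NormedSpace ℝ F]
    {f : E → F} {x : E} (hf : ContDiffAt ℝ 2 f x) (v w : E) :
    fderiv ℝ (fun y => fderiv ℝ f y v) x w = fderiv ℝ (fun y => fderiv ℝ f y w) x v := by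
  have hdiff : DifferentiableAt ℝ (fderiv ℝ f) x :=
    (hf.fderiv_right (m := 1) (by norm_num)).differentiableAt one_ne_zero
  rw [fderiv_clm_apply hdiff (differentiableAt_const v),
    fderiv_clm_apply hdiff (differentiableAt_const w)]
  simpa using (hf.isSymmSndFDerivAt (by simp)) w v

end PartialDerivatives

/-- `F t θ` depends smoothly on `(θ, t) ∈ ℝ × I`. Time is the first argument of `F`, so that `F t`
is a function of the angle. -/
def SmoothStrip (I : Set ℝ) (F : ℝ → ℝ → ℝ) : Prop :=
  ContDiffOn ℝ (⊤ : ℕ∞) (fun q : ℝ × ℝ => F q.2 q.1) (univ ×ˢ I)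

namespace SmoothStrip

variable {I J : Set ℝ} {F G : ℝ → ℝ → ℝ} {t : ℝ}

lemma mono (hF : SmoothStrip I F) (h : J ⊆ I) : SmoothStrip J F :=
  ContDiffOn.mono hF (prod_mono_right h)

lemma continuousOn (hF : SmoothStrip I F) :
    ContinuousOn (fun q : ℝ × ℝ => F q.2 q.1) (univ ×ˢ I) :=
  ContDiffOn.continuousOn hF

lemma contDiff (hF : SmoothStrip I F) (ht : t ∈ I) : ContDiff ℝ (⊤ : ℕ∞) (F t) :=
  contDiffOn_univ.1 <| ContDiffOn.comp (f := fun x : ℝ => (x, t)) hF (by fun_prop)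
    fun _ _ => ⟨trivial, ht⟩

lemma contDiffAt (hF : SmoothStrip I F) (hI : IsOpen I) (ht : t ∈ I) (θ : ℝ) :
    ContDiffAt ℝ (⊤ : ℕ∞) (fun q : ℝ × ℝ => F q.2 q.1) (θ, t) :=
  ContDiffOn.contDiffAt hF ((isOpen_univ.prod hI).mem_nhds ⟨trivial, ht⟩)

lemma hasDerivAt_space (hF : SmoothStrip I F) (hI : IsOpen I) (ht : t ∈ I) (θ : ℝ) :
    HasDerivAt (F t) (fderiv ℝ (fun q : ℝ × ℝ => F q.2 q.1) (θ, t) (1, 0)) θ :=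
  hasDerivAt_fst_of_differentiableAt ((hF.contDiffAt hI ht θ).differentiableAt (by simp))

lemma hasDerivAt_time (hF : SmoothStrip I F) (hI : IsOpen I) (ht : t ∈ I) (θ : ℝ) :
    HasDerivAt (fun s => F s θ) (fderiv ℝ (fun q : ℝ × ℝ => F q.2 q.1) (θ, t) (0, 1)) t :=
  hasDerivAt_snd_of_differentiableAt ((hF.contDiffAt hI ht θ).differentiableAt (by simp))

lemma fderiv_apply (hF : SmoothStrip I F) (hI : IsOpen I) (v : ℝ × ℝ) :
    SmoothStrip I fun t θ => fderiv ℝ (fun q : ℝ × ℝ => F q.2 q.1) (θ, t) v :=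
  (ContDiffOn.fderiv_of_isOpen hF (isOpen_univ.prod hI) (m := (⊤ : ℕ∞)) (by simp)).clm_apply
    contDiffOn_const

lemma of_hasDerivAt_time (hF : SmoothStrip I F) (hI : IsOpen I)
    (hG : ∀ t ∈ I, ∀ θ, HasDerivAt (fun s => F s θ) (G t θ) t) : SmoothStrip I G :=
  (hF.fderiv_apply hI (0, 1)).congr fun ⟨θ, t⟩ ⟨_, ht⟩ =>
    (hG t ht θ).unique (hF.hasDerivAt_time hI ht θ)

protected lemma deriv (hF : SmoothStrip I F) (hI : UniqueDiffOn ℝ I) :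
    SmoothStrip I (fun t => deriv (F t)) := by
  have hfderiv := ContDiffOn.fderivWithin hF (uniqueDiffOn_univ.prod hI)
    (m := (⊤ : ℕ∞)) (by simp)
  refine (hfderiv.clm_apply (contDiffOn_const (c := ((1 : ℝ), (0 : ℝ))))).congr ?_
  rintro ⟨x, t⟩ ⟨-, ht⟩
  have hF' := (ContDiffOn.differentiableOn hF (by simp) (x, t) ⟨trivial, ht⟩).hasFDerivWithinAt
  have hline : HasDerivWithinAt (fun y : ℝ => (y, t)) ((1 : ℝ), (0 : ℝ)) univ x :=
    ((hasDerivAt_id x).prodMk (hasDerivAt_const x t)).hasDerivWithinAt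
  exact (hasDerivWithinAt_univ.1 <| hF'.comp_hasDerivWithinAt (f := fun y : ℝ => (y, t)) x hline
    fun y _ => ⟨trivial, ht⟩).deriv

lemma iteratedDeriv (hF : SmoothStrip I F) (hI : UniqueDiffOn ℝ I) (n : ℕ) :
    SmoothStrip I (fun t => iteratedDeriv n (F t)) := by
  induction n with
  | zero => simpa only [iteratedDeriv_zero] using hF
  | succ n ih => simpa only [iteratedDeriv_succ] using ih.deriv hI

lemma hasDerivAt_time_deriv (hF : SmoothStrip I F) (hI : IsOpen I)
    (hG : ∀ t ∈ I, ∀ θ, HasDerivAt (fun s => F s θ) (G t θ) t) (ht : t ∈ I) (θ : ℝ) :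
    HasDerivAt (fun s => deriv (F s) θ) (deriv (G t) θ) t := by
  have hG_deriv := (hF.fderiv_apply hI (0, 1)).hasDerivAt_space hI ht θ
  rw [← funext fun θ => (hG t ht θ).unique (hF.hasDerivAt_time hI ht θ)] at hG_deriv
  have hF2 : ContDiffAt ℝ 2 (fun q : ℝ × ℝ => F q.2 q.1) (θ, t) :=
    (hF.contDiffAt hI ht θ).of_le (WithTop.coe_le_coe.2 le_top)
  rw [hG_deriv.deriv, fderiv_fderiv_apply_comm hF2]
  refine ((hF.fderiv_apply hI (1, 0)).hasDerivAt_time hI ht θ).congr_of_eventuallyEq ?_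
  filter_upwards [hI.mem_nhds ht] with s hs using (hF.hasDerivAt_space hI hs θ).deriv

lemma hasDerivAt_time_iteratedDeriv (hF : SmoothStrip I F) (hI : IsOpen I)
    (hG : ∀ t ∈ I, ∀ θ, HasDerivAt (fun s => F s θ) (G t θ) t) (n : ℕ) :
    ∀ t ∈ I, ∀ θ,
      HasDerivAt (fun s => _root_.iteratedDeriv n (F s) θ) (_root_.iteratedDeriv n (G t) θ) t := by
  induction n with
  | zero => simpa only [iteratedDeriv_zero] using hG
  | succ n ih =>
    simpa only [iteratedDeriv_succ] using
      fun t ht => (hF.iteratedDeriv hI.uniqueDiffOn n).hasDerivAt_time_deriv hI ih ht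

lemma hasDerivAt_integral (hF : SmoothStrip I F) (hI : IsOpen I)
    (hG : ∀ t ∈ I, ∀ θ, HasDerivAt (fun s => F s θ) (G t θ) t) (ht : t ∈ I) (a b : ℝ) :
    HasDerivAt (fun s => ∫ θ in a..b, F s θ) (∫ θ in a..b, G t θ) t := by
  have hG_smooth := hF.of_hasDerivAt_time hI hG
  obtain ⟨ε, hε, hball⟩ := Metric.nhds_basis_closedBall.mem_iff.1 (hI.mem_nhds ht)
  obtain ⟨C, hC⟩ := (isCompact_uIcc.prod (isCompact_closedBall t ε)).exists_bound_of_continuousOn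
    (hG_smooth.continuousOn.mono (prod_mono (subset_univ (uIcc a b)) hball))
  refine (intervalIntegral.hasDerivAt_integral_of_dominated_loc_of_deriv_le
    (F := F) (F' := G) (bound := fun _ => C) (Metric.closedBall_mem_nhds t hε) ?_
    ((hF.contDiff ht).continuous.intervalIntegrable _ _)
    (hG_smooth.contDiff ht).continuous.aestronglyMeasurable
    (Eventually.of_forall fun θ hθ s hs => hC (θ, s) ⟨uIoc_subset_uIcc hθ, hs⟩)
    intervalIntegrable_const
    (Eventually.of_forall fun θ _ s hs => hG s (hball hs) θ)).2
  filter_upwards [hI.mem_nhds ht] with s hs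
  exact (hF.contDiff hs).continuous.aestronglyMeasurable

end SmoothStrip

section MaximumPrinciple

lemma deriv_deriv_nonpos_of_isLocalMax {f : ℝ → ℝ} {x : ℝ} (h : IsLocalMax f x)
    (hf : ContinuousAt f x) : deriv (deriv f) x ≤ 0 := by
  by_contra! hpos
  have hmin := isLocalMin_of_deriv_deriv_pos hpos h.deriv_eq_zero hf
  have hconst : f =ᶠ[𝓝 x] fun _ => f x := by
    filter_upwards [h, hmin] with y hle hge using le_antisymm hle hge
  refine hpos.ne' ?_
  rw [hconst.deriv.deriv_eq, deriv_const', deriv_const]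

lemma hasDerivAt_nonneg_of_forall_mem_Ioo_le {f : ℝ → ℝ} {a b d : ℝ} (hab : a < b)
    (hf : HasDerivAt f d b) (hle : ∀ x ∈ Ioo a b, f x ≤ f b) : 0 ≤ d := by
  have hslope := (hasDerivWithinAt_iff_tendsto_slope' self_notMem_Iio).1
    (hf.hasDerivWithinAt (s := Iio b))
  refine ge_of_tendsto hslope ?_
  filter_upwards [Ioo_mem_nhdsLT hab] with x hx
  rw [slope_def_field]
  exact div_nonneg_of_nonpos (sub_nonpos.2 (hle x hx)) (sub_nonpos.2 hx.2.le)

lemma exists_max_of_periodic_strip {φ : ℝ → ℝ → ℝ} {P T t₁ : ℝ} (hP : 0 < P) (hT : T ≤ t₁)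
    (hper : ∀ t ∈ Icc T t₁, Function.Periodic (φ t) P)
    (hcont : ContinuousOn (fun q : ℝ × ℝ => φ q.2 q.1) (univ ×ˢ Icc T t₁)) :
    ∃ t₀ ∈ Icc T t₁, ∃ θ₀, ∀ t ∈ Icc T t₁, ∀ θ, φ t θ ≤ φ t₀ θ₀ := by
  obtain ⟨⟨θ₀, t₀⟩, ⟨-, ht₀⟩, hmax⟩ := (isCompact_Icc.prod isCompact_Icc).exists_isMaxOn
    ⟨(0, t₁), ⟨le_rfl, hP.le⟩, hT, le_rfl⟩
    (hcont.mono (prod_mono (subset_univ (Icc 0 P)) subset_rfl))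
  refine ⟨t₀, ht₀, θ₀, fun t ht θ => ?_⟩
  obtain ⟨y, hy, hφ⟩ := (hper t ht).exists_mem_Ico₀ hP θ
  rw [hφ]
  exact hmax (show (y, t) ∈ Icc 0 P ×ˢ Icc T t₁ from ⟨Ico_subset_Icc_self hy, ht⟩)

theorem periodic_maximum_principle {φ : ℝ → ℝ → ℝ} {P T S K : ℝ} (hP : 0 < P)
    (hper : ∀ t ∈ Ico T S, Function.Periodic (φ t) P)
    (hcont : ContinuousOn (fun q : ℝ × ℝ => φ q.2 q.1) (univ ×ˢ Ico T S))
    (hinit : ∀ θ, φ T θ ≤ K)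
    (hdec : ∀ t ∈ Ioo T S, ∀ θ, K < φ t θ → IsLocalMax (φ t) θ →
      ∃ d < 0, HasDerivAt (fun s => φ s θ) d t) :
    ∀ t ∈ Ico T S, ∀ θ, φ t θ ≤ K := by
  intro t₁ ht₁ θ₁
  by_contra! hbig
  have hsub : Icc T t₁ ⊆ Ico T S := fun s hs => ⟨hs.1, hs.2.trans_lt ht₁.2⟩
  obtain ⟨t₀, ht₀, θ₀, hmax⟩ := exists_max_of_periodic_strip hP ht₁.1
    (fun t ht => hper t (hsub ht)) (hcont.mono (prod_mono_right hsub))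
  have hK : K < φ t₀ θ₀ := hbig.trans_le (hmax t₁ ⟨ht₁.1, le_rfl⟩ θ₁)
  have hTt : T < t₀ := ht₀.1.lt_of_ne fun h => (h ▸ hK).not_ge (hinit θ₀)
  obtain ⟨d, hd, hderiv⟩ := hdec t₀ ⟨hTt, ht₀.2.trans_lt ht₁.2⟩ θ₀ hK
    (Eventually.of_forall (hmax t₀ ht₀))
  exact hd.not_ge <| hasDerivAt_nonneg_of_forall_mem_Ioo_le hTt hderiv fun s hs =>
    hmax s ⟨hs.1.le, hs.2.le.trans ht₀.2⟩ θ₀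

end MaximumPrinciple

section LeibnizBounds

variable {u v : ℝ → ℝ} {x A B : ℝ}

lemma abs_iteratedDeriv_mul_le {n : ℕ} (hu : ContDiffAt ℝ n u x) (hv : ContDiffAt ℝ n v x)
    (hA : ∀ i ≤ n, |iteratedDeriv i u x| ≤ A) (hB : ∀ i ≤ n, |iteratedDeriv i v x| ≤ B) :
    |iteratedDeriv n (fun y => u y * v y) x| ≤ 2 ^ n * (A * B) := by
  have hA0 : 0 ≤ A := (abs_nonneg _).trans (hA 0 n.zero_le)
  rw [iteratedDeriv_fun_mul hu hv]
  calc _ ≤ ∑ i ∈ Finset.range (n + 1), (n.choose i : ℝ) * (A * B) := by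
        refine (Finset.abs_sum_le_sum_abs _ _).trans (Finset.sum_le_sum fun i hi => ?_)
        rw [mul_assoc, abs_mul, Nat.abs_cast, abs_mul]
        gcongr
        exacts [hA i (Finset.mem_range_succ_iff.1 hi), hB (n - i) (n.sub_le i)]
    _ = _ := by rw [← Finset.sum_mul, ← Nat.cast_sum, Nat.sum_range_choose]; norm_num

lemma abs_iteratedDeriv_mul_sub_le {n : ℕ} (hu : ContDiffAt ℝ (n + 1 : ℕ) u x)
    (hv : ContDiffAt ℝ (n + 1 : ℕ) v x) (hB0 : 0 ≤ B)
    (hA : ∀ i ≤ n + 1, |iteratedDeriv i u x| ≤ A) (hB : ∀ i < n, |iteratedDeriv i v x| ≤ B) :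
    |iteratedDeriv (n + 1) (fun y => u y * v y) x - u x * iteratedDeriv (n + 1) v x
      - (n + 1) * deriv u x * iteratedDeriv n v x| ≤ 2 ^ (n + 1) * (A * B) := by
  have hA0 : 0 ≤ A := (abs_nonneg _).trans (hA 0 (Nat.zero_le _))
  have hsplit : iteratedDeriv (n + 1) (fun y => u y * v y) x - u x * iteratedDeriv (n + 1) v x
      - (n + 1) * deriv u x * iteratedDeriv n v x = ∑ i ∈ Finset.range n,
        ((n + 1).choose (i + 2) : ℝ) * iteratedDeriv (i + 2) u x *
          iteratedDeriv (n + 1 - (i + 2)) v x := by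
    rw [iteratedDeriv_fun_mul hu hv, Finset.sum_range_succ', Finset.sum_range_succ']
    simp only [zero_add, Nat.choose_one_right, Nat.choose_zero_right, iteratedDeriv_one,
      iteratedDeriv_zero, Nat.add_sub_cancel, Nat.sub_zero]
    push_cast
    ring
  rw [hsplit]
  calc _ ≤ ∑ i ∈ Finset.range n, ((n + 1).choose (i + 2) : ℝ) * (A * B) := by
        refine (Finset.abs_sum_le_sum_abs _ _).trans (Finset.sum_le_sum fun i hi => ?_)
        have hi' := Finset.mem_range.1 hi
        rw [mul_assoc, abs_mul, Nat.abs_cast, abs_mul]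
        gcongr
        exacts [hA (i + 2) (by omega), hB _ (by omega)]
    _ ≤ _ := by
        rw [← Finset.sum_mul, ← Nat.cast_sum]
        gcongr
        have hsum := Nat.sum_range_choose (n + 1)
        rw [Finset.sum_range_succ', Finset.sum_range_succ'] at hsum
        have hle : ∑ i ∈ Finset.range n, (n + 1).choose (i + 2) ≤ 2 ^ (n + 1) :=
          (Nat.le_add_right _ _).trans ((Nat.le_add_right _ _).trans hsum.le)
        exact_mod_cast hle

end LeibnizBounds

section CompositionBounds

variable {K : Set ℝ} {f g : ℝ → ℝ} {Y : ℝ}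

lemma contDiffAt_natCast (hf : ContDiff ℝ (⊤ : ℕ∞) f) (n : ℕ) (x : ℝ) : ContDiffAt ℝ n f x :=
  (hf.of_le (mod_cast le_top)).contDiffAt

lemma contDiff_comp_of_forall_mem (hg : ∀ y ∈ K, ContDiffAt ℝ (⊤ : ℕ∞) g y)
    (hf : ContDiff ℝ (⊤ : ℕ∞) f) (hfK : ∀ x, f x ∈ K) :
    ContDiff ℝ (⊤ : ℕ∞) fun x => g (f x) :=
  contDiff_iff_contDiffAt.2 fun x => (hg _ (hfK x)).comp x hf.contDiffAt

lemma hasDerivAt_comp_of_forall_mem (hg : ∀ y ∈ K, ContDiffAt ℝ (⊤ : ℕ∞) g y)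
    (hf : ContDiff ℝ (⊤ : ℕ∞) f) (hfK : ∀ x, f x ∈ K) (x : ℝ) :
    HasDerivAt (fun y => g (f y)) (deriv g (f x) * deriv f x) x :=
  ((hg _ (hfK x)).differentiableAt (by simp)).hasDerivAt.comp x
    (hf.differentiable (by simp) x).hasDerivAt

lemma exists_forall_mem_abs_le (hK : IsCompact K) (hg : ∀ y ∈ K, ContDiffAt ℝ (⊤ : ℕ∞) g y) :
    ∃ C, 0 ≤ C ∧ ∀ y ∈ K, |g y| ≤ C := by
  obtain ⟨C, hC⟩ := hK.exists_bound_of_continuousOn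
    fun y hy => (hg y hy).continuousAt.continuousWithinAt
  exact ⟨|C|, abs_nonneg C, fun y hy => (hC y hy).trans (le_abs_self C)⟩

lemma abs_iteratedDeriv_succ_comp_le {n : ℕ} {x A : ℝ}
    (hg : ∀ y ∈ K, ContDiffAt ℝ (⊤ : ℕ∞) g y) (hf : ContDiff ℝ (⊤ : ℕ∞) f) (hfK : ∀ x, f x ∈ K)
    (hA : ∀ i ≤ n, |iteratedDeriv i (fun y => deriv g (f y)) x| ≤ A)
    (hY : ∀ i ≤ n, |iteratedDeriv i f x| ≤ Y) :
    |iteratedDeriv (n + 1) (fun y => g (f y)) x| ≤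
      2 ^ n * (A * ((1 + Y) * (1 + |iteratedDeriv (n + 1) f x|))) := by
  have hg' : ∀ y ∈ K, ContDiffAt ℝ (⊤ : ℕ∞) (deriv g) y :=
    fun y hy => (hg y hy).derivWithin (by simp)
  have hY0 : 0 ≤ Y := (abs_nonneg _).trans (hY 0 n.zero_le)
  have hB : ∀ i ≤ n, |iteratedDeriv i (deriv f) x| ≤
      (1 + Y) * (1 + |iteratedDeriv (n + 1) f x|) := by
    intro i hi
    rw [← iteratedDeriv_succ']
    rcases hi.eq_or_lt with rfl | hi
    · nlinarith [abs_nonneg (iteratedDeriv (i + 1) f x)]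
    · nlinarith [hY (i + 1) (by omega), abs_nonneg (iteratedDeriv (n + 1) f x)]
  rw [iteratedDeriv_succ', funext fun x => (hasDerivAt_comp_of_forall_mem hg hf hfK x).deriv]
  exact abs_iteratedDeriv_mul_le
    (contDiffAt_natCast (contDiff_comp_of_forall_mem hg' hf hfK) n x)
    (contDiffAt_natCast (contDiff_infty_iff_deriv.1 hf).2 n x) hA hB

lemma exists_abs_iteratedDeriv_comp_le (hK : IsCompact K) (n : ℕ)
    (hg : ∀ y ∈ K, ContDiffAt ℝ (⊤ : ℕ∞) g y) :
    ∃ C, 0 ≤ C ∧ ∀ f : ℝ → ℝ, ContDiff ℝ (⊤ : ℕ∞) f → (∀ x, f x ∈ K) → ∀ x, ∀ m ≤ n,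
      (∀ i < m, |iteratedDeriv i f x| ≤ Y) →
        |iteratedDeriv m (fun y => g (f y)) x| ≤ C * (1 + |iteratedDeriv m f x|) := by
  induction n generalizing g with
  | zero =>
    obtain ⟨C, hC0, hC⟩ := exists_forall_mem_abs_le hK hg
    refine ⟨C, hC0, fun f _ hfK x m hm _ => ?_⟩
    obtain rfl := Nat.le_zero.1 hm
    exact (hC _ (hfK x)).trans (le_mul_of_one_le_right hC0 (by simp))
  | succ n ih =>
    have hg' : ∀ y ∈ K, ContDiffAt ℝ (⊤ : ℕ∞) (deriv g) y :=
      fun y hy => (hg y hy).derivWithin (by simp)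
    obtain ⟨C, hC0, hC⟩ := ih hg
    obtain ⟨C', hC'0, hC'⟩ := ih hg'
    refine ⟨max C (2 ^ n * (C' * (1 + Y) * (1 + Y))), le_max_of_le_left hC0,
      fun f hf hfK x m hm hfY => ?_⟩
    rcases Nat.le_succ_iff.1 hm with hm | rfl
    · refine (hC f hf hfK x m hm hfY).trans ?_
      gcongr
      exact le_max_left _ _
    have hA : ∀ i ≤ n, |iteratedDeriv i (fun y => deriv g (f y)) x| ≤ C' * (1 + Y) := by
      intro i hi
      refine (hC' f hf hfK x i hi fun j hj => hfY j (by omega)).trans ?_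
      gcongr
      exact hfY i (by omega)
    calc |iteratedDeriv (n + 1) (fun y => g (f y)) x|
        ≤ 2 ^ n * (C' * (1 + Y) * ((1 + Y) * (1 + |iteratedDeriv (n + 1) f x|))) :=
          abs_iteratedDeriv_succ_comp_le hg hf hfK hA fun i hi => hfY i (by omega)
      _ = 2 ^ n * (C' * (1 + Y) * (1 + Y)) * (1 + |iteratedDeriv (n + 1) f x|) := by ring
      _ ≤ _ := by
        gcongr
        exact le_max_right _ _

end CompositionBounds

section Quasilinear

variable {K : Set ℝ} {a b f : ℝ → ℝ} {Y : ℝ}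

/-- The quasilinear operator `f ↦ a(f) f'' + b(f)`. The rescaled speed of the flow evolves by a
time-dependent multiple of such an operator. -/
noncomputable def quasilinear (a b f : ℝ → ℝ) (x : ℝ) : ℝ :=
  a (f x) * deriv (deriv f) x + b (f x)

/-- What remains of the `n`-th derivative of `quasilinear a b f` after removing the two terms
containing the derivatives of `f` of order `n + 2` and `n + 1`. -/
noncomputable def quasilinearRemainder (a b : ℝ → ℝ) (n : ℕ) (f : ℝ → ℝ) (x : ℝ) : ℝ :=
  iteratedDeriv n (quasilinear a b f) x - a (f x) * iteratedDeriv (n + 2) f x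
    - n * (deriv a (f x) * deriv f x) * iteratedDeriv (n + 1) f x

lemma contDiff_iteratedDeriv (hf : ContDiff ℝ (⊤ : ℕ∞) f) (n : ℕ) :
    ContDiff ℝ (⊤ : ℕ∞) (iteratedDeriv n f) := by
  simpa only [iteratedDeriv_eq_iterate] using hf.iterate_deriv n

lemma iteratedDeriv_quasilinear (ha : ∀ y ∈ K, ContDiffAt ℝ (⊤ : ℕ∞) a y)
    (hb : ∀ y ∈ K, ContDiffAt ℝ (⊤ : ℕ∞) b y) (hf : ContDiff ℝ (⊤ : ℕ∞) f) (hfK : ∀ x, f x ∈ K)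
    (n : ℕ) (x : ℝ) :
    iteratedDeriv n (quasilinear a b f) x =
      iteratedDeriv n (fun y => a (f y) * iteratedDeriv 2 f y) x +
        iteratedDeriv n (fun y => b (f y)) x := by
  rw [← iteratedDeriv_fun_add
    (contDiffAt_natCast ((contDiff_comp_of_forall_mem ha hf hfK).mul (contDiff_iteratedDeriv hf 2))
      n x) (contDiffAt_natCast (contDiff_comp_of_forall_mem hb hf hfK) n x)]
  simp only [iteratedDeriv_succ, iteratedDeriv_zero]
  rfl

lemma exists_abs_iteratedDeriv_comp_mul_sub_le (hK : IsCompact K) (hY : 0 ≤ Y) (n : ℕ)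
    (ha : ∀ y ∈ K, ContDiffAt ℝ (⊤ : ℕ∞) a y) :
    ∃ C, 0 ≤ C ∧ ∀ f : ℝ → ℝ, ContDiff ℝ (⊤ : ℕ∞) f → (∀ x, f x ∈ K) → ∀ x,
      (∀ i < n, |iteratedDeriv i f x| ≤ Y) →
        |iteratedDeriv n (fun y => a (f y) * iteratedDeriv 2 f y) x
            - a (f x) * iteratedDeriv (n + 2) f x
            - n * (deriv a (f x) * deriv f x) * iteratedDeriv (n + 1) f x| ≤
          C * (1 + |iteratedDeriv n f x|) ^ 2 := by
  rcases n with _ | n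
  · exact ⟨0, le_rfl, fun f _ _ x _ => by simp⟩
  obtain ⟨A, hA0, hA⟩ := exists_abs_iteratedDeriv_comp_le (Y := Y) hK (n + 1) ha
  refine ⟨2 ^ (n + 1) * (A * (1 + Y) * (1 + Y)), by positivity, fun f hf hfK x hfY => ?_⟩
  set B := (1 + Y) * (1 + |iteratedDeriv (n + 1) f x|) with hB
  have hB0 : 0 ≤ B := by positivity
  have hle : ∀ i ≤ n + 1, 1 + |iteratedDeriv i f x| ≤ B := by
    intro i hi
    rcases hi.eq_or_lt with rfl | hi
    · exact le_mul_of_one_le_left (by positivity) (by linarith)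
    · nlinarith [hfY i hi, abs_nonneg (iteratedDeriv (n + 1) f x)]
  have hiter : ∀ i, iteratedDeriv i (iteratedDeriv 2 f) = iteratedDeriv (i + 2) f := fun i => by
    simp only [iteratedDeriv_eq_iterate, Function.iterate_add_apply]
  have hleibniz := abs_iteratedDeriv_mul_sub_le
    (contDiffAt_natCast (contDiff_comp_of_forall_mem ha hf hfK) (n + 1) x)
    (contDiffAt_natCast (contDiff_iteratedDeriv hf 2) (n + 1) x) hB0
    (fun i hi => (hA f hf hfK x i hi fun j hj => hfY j (by omega)).trans
      (mul_le_mul_of_nonneg_left (hle i hi) hA0))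
    fun i hi => by
      rw [hiter]
      exact (le_add_of_nonneg_left zero_le_one).trans (hle (i + 2) (by omega))
  rw [hiter, hiter, (hasDerivAt_comp_of_forall_mem ha hf hfK x).deriv] at hleibniz
  push_cast
  exact hleibniz.trans_eq (by rw [hB]; ring)

lemma exists_abs_quasilinearRemainder_le (hK : IsCompact K) (hY : 0 ≤ Y) (n : ℕ)
    (ha : ∀ y ∈ K, ContDiffAt ℝ (⊤ : ℕ∞) a y) (hb : ∀ y ∈ K, ContDiffAt ℝ (⊤ : ℕ∞) b y) :
    ∃ C, 0 ≤ C ∧ ∀ f : ℝ → ℝ, ContDiff ℝ (⊤ : ℕ∞) f → (∀ x, f x ∈ K) → ∀ x,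
      (∀ i < n, |iteratedDeriv i f x| ≤ Y) →
        |quasilinearRemainder a b n f x| ≤ C * (1 + |iteratedDeriv n f x|) ^ 2 := by
  obtain ⟨A, hA0, hA⟩ := exists_abs_iteratedDeriv_comp_mul_sub_le hK hY n ha
  obtain ⟨B, hB0, hB⟩ := exists_abs_iteratedDeriv_comp_le (Y := Y) hK n hb
  refine ⟨A + B, by positivity, fun f hf hfK x hfY => ?_⟩
  rw [quasilinearRemainder, iteratedDeriv_quasilinear ha hb hf hfK, add_sub_right_comm,
    add_sub_right_comm, add_mul]
  refine (abs_add_le _ _).trans (add_le_add (hA f hf hfK x hfY) ((hB f hf hfK x n le_rfl hfY).trans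
    (mul_le_mul_of_nonneg_left (le_self_pow₀ ?_ two_ne_zero) hB0)))
  exact le_add_of_nonneg_right (abs_nonneg _)

end Quasilinear

lemma periodic_deriv {f : ℝ → ℝ} {P : ℝ} (hf : Function.Periodic f P) :
    Function.Periodic (deriv f) P := fun x => by
  rw [← deriv_comp_add_const, hf.funext]

lemma periodic_iteratedDeriv {f : ℝ → ℝ} {P : ℝ} (hf : Function.Periodic f P) (n : ℕ) :
    Function.Periodic (iteratedDeriv n f) P := fun x => by
  rw [← congrFun (iteratedDeriv_comp_add_const n f P) x, hf.funext]

lemma exists_forall_abs_le_of_periodic {f : ℝ → ℝ} {P : ℝ} (hP : P ≠ 0)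
    (hf : Function.Periodic f P) (hc : Continuous f) : ∃ C, ∀ x, |f x| ≤ C := by
  obtain ⟨C, hC⟩ := (hf.isBounded_of_continuous hP hc).exists_norm_le
  exact ⟨C, fun x => hC _ (mem_range_self x)⟩

lemma hasDerivAt_iteratedDeriv {f : ℝ → ℝ} (hf : ContDiff ℝ (⊤ : ℕ∞) f) (n : ℕ) (x : ℝ) :
    HasDerivAt (iteratedDeriv n f) (iteratedDeriv (n + 1) f x) x := by
  rw [iteratedDeriv_succ]
  exact ((contDiff_iteratedDeriv hf n).differentiable (by simp) x).hasDerivAt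

section Bernstein

variable {K : Set ℝ} {a b f : ℝ → ℝ} {M Y σ : ℝ} {l : ℕ}

/-- The auxiliary function of Bernstein's method: where it is large and maximal, the square of the
lower derivative provides a good term that absorbs the quadratic growth in `iteratedDeriv (l + 1) f`
of the evolution equation. The sign `σ = ±1` yields two-sided bounds. -/
noncomputable def bernsteinFun (M σ : ℝ) (l : ℕ) (f : ℝ → ℝ) (x : ℝ) : ℝ :=
  σ * iteratedDeriv (l + 1) f x + M * iteratedDeriv l f x ^ 2

lemma hasDerivAt_bernsteinFun (hf : ContDiff ℝ (⊤ : ℕ∞) f) (x : ℝ) :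
    HasDerivAt (bernsteinFun M σ l f) (σ * iteratedDeriv (l + 2) f x +
      2 * M * (iteratedDeriv l f x * iteratedDeriv (l + 1) f x)) x :=
  (((hasDerivAt_iteratedDeriv hf (l + 1) x).const_mul σ).add
    (((hasDerivAt_iteratedDeriv hf l x).pow 2).const_mul M)).congr_deriv (by push_cast; ring)

lemma deriv_deriv_bernsteinFun (hf : ContDiff ℝ (⊤ : ℕ∞) f) (x : ℝ) :
    deriv (deriv (bernsteinFun M σ l f)) x = σ * iteratedDeriv (l + 3) f x +
      2 * M * (iteratedDeriv (l + 1) f x ^ 2 +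
        iteratedDeriv l f x * iteratedDeriv (l + 2) f x) := by
  rw [show deriv (bernsteinFun M σ l f) = _ from
    funext fun y => (hasDerivAt_bernsteinFun hf y).deriv]
  exact (((hasDerivAt_iteratedDeriv hf (l + 2) x).const_mul σ).add
    (((hasDerivAt_iteratedDeriv hf l x).mul
      (hasDerivAt_iteratedDeriv hf (l + 1) x)).const_mul (2 * M))).deriv.trans (by ring)

lemma bernstein_neg {a a₀ d n y z z₁ z₂ R₀ R₁ C₀ C₁ D : ℝ} (hσ : |σ| = 1) (hM : 0 ≤ M)
    (ha₀ : 0 ≤ a₀) (ha : a₀ ≤ a) (hC₁ : 0 ≤ C₁) (hD : 0 ≤ D) (hMa : 2 * M * a₀ = 2 * C₁ + 1)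
    (hy : |y| ≤ Y) (hR₀ : |R₀| ≤ C₀) (hR₁ : |R₁| ≤ C₁ * (1 + |z|) ^ 2)
    (hd : -(d * y * z) ≤ D * |z|) (hcrit : σ * z₁ + 2 * M * (y * z) = 0)
    (hmax : σ * z₂ + 2 * M * (z ^ 2 + y * z₁) ≤ 0)
    (hz : 2 * M * D + 2 * C₁ + 2 * M * (Y * C₀) + 1 ≤ |z|) :
    σ * (a * z₂ + (n + 1) * d * z₁ + R₁) + 2 * M * y * (a * z₁ + n * d * z + R₀) < 0 := by
  have hσR : σ * R₁ ≤ C₁ * (1 + |z|) ^ 2 :=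
    (le_abs_self _).trans (by rwa [abs_mul, hσ, one_mul])
  have hyR : y * R₀ ≤ Y * C₀ := by
    refine (le_abs_self _).trans ?_
    rw [abs_mul]
    exact mul_le_mul hy hR₀ (abs_nonneg _) ((abs_nonneg _).trans hy)
  have hYC : 0 ≤ Y * C₀ :=
    mul_nonneg ((abs_nonneg _).trans hy) ((abs_nonneg _).trans hR₀)
  have hgood : (2 * C₁ + 1) * |z| ^ 2 ≤ a * (2 * M * z ^ 2) := by
    rw [← hMa, sq_abs]
    nlinarith [mul_nonneg hM (sq_nonneg z)]
  calc σ * (a * z₂ + (n + 1) * d * z₁ + R₁) + 2 * M * y * (a * z₁ + n * d * z + R₀)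
      = a * (σ * z₂ + 2 * M * (z ^ 2 + y * z₁)) - a * (2 * M * z ^ 2)
        + (n + 1) * d * (σ * z₁ + 2 * M * (y * z)) + 2 * M * (-(d * y * z))
        + σ * R₁ + 2 * M * (y * R₀) := by ring
    _ ≤ 0 - (2 * C₁ + 1) * |z| ^ 2 + 0 + 2 * M * (D * |z|)
        + C₁ * (1 + |z|) ^ 2 + 2 * M * (Y * C₀) := by
        rw [hcrit, mul_zero]
        gcongr
        exact mul_nonpos_of_nonneg_of_nonpos (ha₀.trans ha) hmax
    _ < 0 := by nlinarith [mul_nonneg hM hD, mul_nonneg hM hYC, mul_self_nonneg (|z| - 1)]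

lemma exists_neg_deriv_mul_le (hK : IsCompact K) (ha : ∀ y ∈ K, ContDiffAt ℝ (⊤ : ℕ∞) a y)
    (ha' : ∀ y ∈ K, 0 ≤ y * deriv a y) (hY : 0 ≤ Y) (l : ℕ) :
    ∃ D, 0 ≤ D ∧ ∀ f : ℝ → ℝ, (∀ x, f x ∈ K) → ∀ x, (∀ i ≤ l, |iteratedDeriv i f x| ≤ Y) →
      -(deriv a (f x) * deriv f x * iteratedDeriv l f x * iteratedDeriv (l + 1) f x) ≤
        D * |iteratedDeriv (l + 1) f x| := by
  rcases l with _ | l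
  · refine ⟨0, le_rfl, fun f hfK x _ => ?_⟩
    simp only [iteratedDeriv_zero, zero_add, iteratedDeriv_one, zero_mul]
    nlinarith [mul_nonneg (ha' _ (hfK x)) (sq_nonneg (deriv f x))]
  · obtain ⟨A, hA0, hA⟩ := exists_forall_mem_abs_le hK fun y hy =>
      (ha y hy).derivWithin (m := (⊤ : ℕ∞)) (by simp)
    refine ⟨A * Y * Y, by positivity, fun f hfK x hfY => (neg_le_abs _).trans ?_⟩
    rw [abs_mul, abs_mul, abs_mul]
    gcongr
    exacts [hA _ (hfK x), iteratedDeriv_one (f := f) ▸ hfY 1 (by omega), hfY (l + 1) le_rfl]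

lemma exists_bernstein_neg_of_isLocalMax (hK : IsCompact K)
    (ha : ∀ y ∈ K, ContDiffAt ℝ (⊤ : ℕ∞) a y) (hb : ∀ y ∈ K, ContDiffAt ℝ (⊤ : ℕ∞) b y)
    (ha_pos : ∀ y ∈ K, 0 < a y) (ha' : ∀ y ∈ K, 0 ≤ y * deriv a y) (hY : 0 ≤ Y) (l : ℕ) :
    ∃ M, 0 ≤ M ∧ ∃ Z, ∀ σ, |σ| = 1 → ∀ f : ℝ → ℝ, ContDiff ℝ (⊤ : ℕ∞) f → (∀ x, f x ∈ K) →
      ∀ x, (∀ i ≤ l, |iteratedDeriv i f x| ≤ Y) → IsLocalMax (bernsteinFun M σ l f) x →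
        Z ≤ |iteratedDeriv (l + 1) f x| →
          σ * iteratedDeriv (l + 1) (quasilinear a b f) x
            + 2 * M * iteratedDeriv l f x * iteratedDeriv l (quasilinear a b f) x < 0 := by
  obtain ⟨C₀, hC₀, hR₀⟩ := exists_abs_quasilinearRemainder_le hK hY l ha hb
  obtain ⟨C₁, hC₁, hR₁⟩ := exists_abs_quasilinearRemainder_le hK hY (l + 1) ha hb
  obtain ⟨D, hD, hd⟩ := exists_neg_deriv_mul_le hK ha ha' hY l
  obtain ⟨a₀, ha₀, hle⟩ := hK.exists_forall_le' (a := 0)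
    (fun y hy => (ha y hy).continuousAt.continuousWithinAt) ha_pos
  set M := (2 * C₁ + 1) / (2 * a₀) with hM_def
  have hM : 0 ≤ M := by positivity
  refine ⟨M, hM, 2 * M * D + 2 * C₁ + 2 * M * (Y * (C₀ * (1 + Y) ^ 2)) + 1,
    fun σ hσ f hf hfK x hfY hmax hZ => ?_⟩
  have hcrit := hmax.deriv_eq_zero
  rw [(hasDerivAt_bernsteinFun hf x).deriv] at hcrit
  have hsecond := deriv_deriv_nonpos_of_isLocalMax hmax (hasDerivAt_bernsteinFun hf x).continuousAt
  rw [deriv_deriv_bernsteinFun hf x] at hsecond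
  have hlow : |quasilinearRemainder a b l f x| ≤ C₀ * (1 + Y) ^ 2 :=
    (hR₀ f hf hfK x fun i hi => hfY i hi.le).trans (by gcongr; exact hfY l le_rfl)
  have hneg := bernstein_neg (n := l) hσ hM ha₀.le (hle _ (hfK x)) hC₁ hD
    (by rw [hM_def]; field_simp) (hfY l le_rfl) hlow
    (hR₁ f hf hfK x fun i hi => hfY i (by omega)) (hd f hfK x hfY) hcrit hsecond hZ
  refine lt_of_eq_of_lt ?_ hneg
  simp only [quasilinearRemainder]
  push_cast
  ring

end Bernstein

/-- A solution of `∂U/∂t = c(t) (a(U) U'' + b(U))` with values in `K`, smooth up to the initial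
time `T` and `2π`-periodic in space. -/
structure QuasilinearFlow (a b c : ℝ → ℝ) (K : Set ℝ) (T S : ℝ) (U : ℝ → ℝ → ℝ) : Prop where
  smooth : SmoothStrip (Ico T S) U
  periodic : ∀ t ∈ Ico T S, Function.Periodic (U t) (2 * π)
  mem : ∀ t ∈ Ico T S, ∀ θ, U t θ ∈ K
  coeff_pos : ∀ t ∈ Ioo T S, 0 < c t
  evolution : ∀ t ∈ Ioo T S, ∀ θ,
    HasDerivAt (fun s => U s θ) (c t * quasilinear a b (U t) θ) t

namespace QuasilinearFlow

variable {a b c : ℝ → ℝ} {K : Set ℝ} {T S M Y σ : ℝ} {U : ℝ → ℝ → ℝ} {l : ℕ}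

lemma hasDerivAt_iteratedDeriv (h : QuasilinearFlow a b c K T S U) (n : ℕ) {t : ℝ}
    (ht : t ∈ Ioo T S) (θ : ℝ) :
    HasDerivAt (fun s => iteratedDeriv n (U s) θ)
      (c t * iteratedDeriv n (quasilinear a b (U t)) θ) t := by
  rw [← iteratedDeriv_const_mul_field]
  exact (h.smooth.mono Ioo_subset_Ico_self).hasDerivAt_time_iteratedDeriv isOpen_Ioo
    h.evolution n t ht θ

lemma hasDerivAt_bernsteinFun (h : QuasilinearFlow a b c K T S U) {t : ℝ} (ht : t ∈ Ioo T S)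
    (θ : ℝ) : HasDerivAt (fun s => bernsteinFun M σ l (U s) θ)
      (c t * (σ * iteratedDeriv (l + 1) (quasilinear a b (U t)) θ
        + 2 * M * iteratedDeriv l (U t) θ * iteratedDeriv l (quasilinear a b (U t)) θ)) t :=
  (((h.hasDerivAt_iteratedDeriv (l + 1) ht θ).const_mul σ).add
    (((h.hasDerivAt_iteratedDeriv l ht θ).pow 2).const_mul M)).congr_deriv (by push_cast; ring)

lemma periodic_bernsteinFun (h : QuasilinearFlow a b c K T S U) {t : ℝ} (ht : t ∈ Ico T S) :
    Function.Periodic (bernsteinFun M σ l (U t)) (2 * π) := fun θ => by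
  simp only [bernsteinFun, periodic_iteratedDeriv (h.periodic t ht) _ θ]

lemma continuousOn_bernsteinFun (h : QuasilinearFlow a b c K T S U) :
    ContinuousOn (fun q : ℝ × ℝ => bernsteinFun M σ l (U q.2) q.1) (univ ×ˢ Ico T S) :=
  have hcont := fun n => (h.smooth.iteratedDeriv (uniqueDiffOn_Ico T S) n).continuousOn
  (continuousOn_const.mul (hcont (l + 1))).add (continuousOn_const.mul ((hcont l).pow 2))

lemma exists_abs_iteratedDeriv_succ_le (h : QuasilinearFlow a b c K T S U) (hTS : T < S)
    (hK : IsCompact K) (ha : ∀ y ∈ K, ContDiffAt ℝ (⊤ : ℕ∞) a y)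
    (hb : ∀ y ∈ K, ContDiffAt ℝ (⊤ : ℕ∞) b y) (ha_pos : ∀ y ∈ K, 0 < a y)
    (ha' : ∀ y ∈ K, 0 ≤ y * deriv a y)
    (hY : ∀ t ∈ Ico T S, ∀ θ, ∀ i ≤ l, |iteratedDeriv i (U t) θ| ≤ Y) :
    ∃ C, ∀ t ∈ Ico T S, ∀ θ, |iteratedDeriv (l + 1) (U t) θ| ≤ C := by
  have hT : T ∈ Ico T S := ⟨le_rfl, hTS⟩
  have hY0 : 0 ≤ Y := (abs_nonneg _).trans (hY T hT 0 0 l.zero_le)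
  obtain ⟨M, hM, Z, hneg⟩ := exists_bernstein_neg_of_isLocalMax hK ha hb ha_pos ha' hY0 l
  obtain ⟨C₀, hC₀⟩ := exists_forall_abs_le_of_periodic two_pi_pos.ne'
    (periodic_iteratedDeriv (h.periodic T hT) (l + 1))
    (contDiff_iteratedDeriv (h.smooth.contDiff hT) (l + 1)).continuous
  have hlow : ∀ t ∈ Ico T S, ∀ θ, M * iteratedDeriv l (U t) θ ^ 2 ≤ M * Y ^ 2 :=
    fun t ht θ => mul_le_mul_of_nonneg_left (sq_le_sq' (abs_le.1 (hY t ht θ l le_rfl)).1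
      (abs_le.1 (hY t ht θ l le_rfl)).2) hM
  have hσ_le : ∀ σ : ℝ, |σ| = 1 → ∀ w : ℝ, σ * w ≤ |w| := fun σ hσ w =>
    (le_abs_self _).trans_eq (by rw [abs_mul, hσ, one_mul])
  have hφ : ∀ σ, |σ| = 1 → ∀ t ∈ Ico T S, ∀ θ,
      bernsteinFun M σ l (U t) θ ≤ max C₀ Z + M * Y ^ 2 := by
    intro σ hσ
    refine periodic_maximum_principle two_pi_pos (fun t ht => h.periodic_bernsteinFun ht)
      h.continuousOn_bernsteinFun (fun θ => ?_) fun t ht θ hgt hmax => ?_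
    · exact add_le_add (((hσ_le σ hσ _).trans (hC₀ θ)).trans (le_max_left _ _)) (hlow T hT θ)
    · have ht' := Ioo_subset_Ico_self ht
      have hZ : Z ≤ |iteratedDeriv (l + 1) (U t) θ| := by
        rw [bernsteinFun] at hgt
        linarith [hlow t ht' θ, hσ_le σ hσ (iteratedDeriv (l + 1) (U t) θ), le_max_right C₀ Z]
      exact ⟨_, mul_neg_of_pos_of_neg (h.coeff_pos t ht) (hneg σ hσ (U t) (h.smooth.contDiff ht')
        (h.mem t ht') θ (hY t ht' θ) hmax hZ), h.hasDerivAt_bernsteinFun ht θ⟩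
  refine ⟨max C₀ Z + M * Y ^ 2, fun t ht θ => ?_⟩
  have hsq : 0 ≤ M * iteratedDeriv l (U t) θ ^ 2 := by positivity
  have hpos := hφ 1 (by norm_num) t ht θ
  have hneg := hφ (-1) (by norm_num) t ht θ
  rw [bernsteinFun] at hpos hneg
  exact abs_le.2 ⟨by linarith, by linarith⟩

theorem exists_abs_iteratedDeriv_le (h : QuasilinearFlow a b c K T S U) (hTS : T < S)
    (hK : IsCompact K) (ha : ∀ y ∈ K, ContDiffAt ℝ (⊤ : ℕ∞) a y)
    (hb : ∀ y ∈ K, ContDiffAt ℝ (⊤ : ℕ∞) b y) (ha_pos : ∀ y ∈ K, 0 < a y)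
    (ha' : ∀ y ∈ K, 0 ≤ y * deriv a y) (n : ℕ) :
    ∃ Y, ∀ t ∈ Ico T S, ∀ θ, ∀ i ≤ n, |iteratedDeriv i (U t) θ| ≤ Y := by
  induction n with
  | zero =>
    obtain ⟨C, -, hC⟩ := exists_forall_mem_abs_le hK (g := fun y => y) fun _ _ => contDiffAt_id
    refine ⟨C, fun t ht θ i hi => ?_⟩
    obtain rfl := Nat.le_zero.1 hi
    exact hC _ (h.mem t ht θ)
  | succ n ih =>
    obtain ⟨Y, hY⟩ := ih
    obtain ⟨C, hC⟩ := h.exists_abs_iteratedDeriv_succ_le hTS hK ha hb ha_pos ha' hY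
    refine ⟨max Y C, fun t ht θ i hi => ?_⟩
    rcases Nat.le_succ_iff.1 hi with hi | rfl
    · exact (hY t ht θ i hi).trans (le_max_left _ _)
    · exact (hC t ht θ).trans (le_max_right _ _)

end QuasilinearFlow

section PeriodicIntegrals

variable {f g : ℝ → ℝ} {P : ℝ}

lemma sq_integral_mul_le (hf : Continuous f) (hg : Continuous g) {a b : ℝ} (hab : a ≤ b) :
    (∫ x in a..b, f x * g x) ^ 2 ≤ (∫ x in a..b, f x ^ 2) * ∫ x in a..b, g x ^ 2 := by
  have hquad : ∀ y : ℝ, 0 ≤ (∫ x in a..b, f x ^ 2) * (y * y) +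
      (2 * ∫ x in a..b, f x * g x) * y + ∫ x in a..b, g x ^ 2 := by
    intro y
    have hnonneg : 0 ≤ ∫ x in a..b, (y * f x + g x) ^ 2 :=
      intervalIntegral.integral_nonneg hab fun x _ => sq_nonneg _
    have hexpand : ∀ x, (y * f x + g x) ^ 2 =
        y * y * f x ^ 2 + 2 * y * (f x * g x) + g x ^ 2 := fun x => by ring
    simp only [hexpand] at hnonneg
    rw [intervalIntegral.integral_add, intervalIntegral.integral_add,
      intervalIntegral.integral_const_mul, intervalIntegral.integral_const_mul] at hnonneg
    · linarith
    all_goals exact Continuous.intervalIntegrable (by fun_prop) _ _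
  have hdiscrim := discrim_le_zero hquad
  rw [discrim] at hdiscrim
  linarith

lemma integral_mul_deriv_of_periodic (hf : ContDiff ℝ 1 f) (hg : ContDiff ℝ 1 g)
    (hfP : Function.Periodic f P) (hgP : Function.Periodic g P) :
    ∫ x in 0..P, f x * deriv g x = -∫ x in 0..P, deriv f x * g x := by
  rw [intervalIntegral.integral_mul_deriv_eq_deriv_mul
    (fun x _ => (hf.differentiable one_ne_zero x).hasDerivAt)
    (fun x _ => (hg.differentiable one_ne_zero x).hasDerivAt)
    (hf.continuous_deriv_one.intervalIntegrable _ _)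
    (hg.continuous_deriv_one.intervalIntegrable _ _), hfP.eq, hgP.eq]
  ring

lemma sq_sub_le_integral_deriv_sq (hf : ContDiff ℝ 1 f) (hP : 0 < P)
    (hper : Function.Periodic f P) (x y : ℝ) :
    (f x - f y) ^ 2 ≤ P * ∫ z in 0..P, deriv f z ^ 2 := by
  have hd := hf.continuous_deriv_one
  have hordered : ∀ x ∈ Ico 0 P, ∀ y ∈ Ico 0 P, y ≤ x →
      (f x - f y) ^ 2 ≤ P * ∫ z in 0..P, deriv f z ^ 2 := by
    intro x hx y hy hyx
    calc (f x - f y) ^ 2 = (∫ z in y..x, 1 * deriv f z) ^ 2 := by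
          simp only [one_mul]
          rw [intervalIntegral.integral_deriv_eq_sub
            (fun z _ => hf.differentiable one_ne_zero z) (hd.intervalIntegrable _ _)]
      _ ≤ (x - y) * ∫ z in y..x, deriv f z ^ 2 := by
          simpa using sq_integral_mul_le (continuous_const (y := (1 : ℝ))) hd hyx
      _ ≤ P * ∫ z in 0..P, deriv f z ^ 2 :=
          mul_le_mul (by linarith [hx.2, hy.1])
            (intervalIntegral.integral_mono_interval hy.1 hyx hx.2.le
              (Eventually.of_forall fun z => sq_nonneg _) ((hd.pow 2).intervalIntegrable _ _))
            (intervalIntegral.integral_nonneg hyx fun z _ => sq_nonneg _) hP.le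
  obtain ⟨x', hx', hfx⟩ := hper.exists_mem_Ico₀ hP x
  obtain ⟨y', hy', hfy⟩ := hper.exists_mem_Ico₀ hP y
  rw [hfx, hfy]
  rcases le_total y' x' with h | h
  · exact hordered x' hx' y' hy' h
  · rw [← neg_sub, neg_sq]
    exact hordered y' hy' x' hx' h

lemma deriv_sq_le_integral_deriv_deriv_sq (hf : ContDiff ℝ 2 f) (hP : 0 < P)
    (hper : Function.Periodic f P) (x : ℝ) :
    deriv f x ^ 2 ≤ P * ∫ z in 0..P, deriv (deriv f) z ^ 2 := by
  obtain ⟨z, -, hz⟩ := exists_deriv_eq_zero hP hf.continuous.continuousOn hper.eq.symm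
  have hosc := sq_sub_le_integral_deriv_sq (hf.deriv' : ContDiff ℝ 1 (deriv f)) hP
    (periodic_deriv hper) x z
  rwa [hz, sub_zero] at hosc

end PeriodicIntegrals

section LogConvexSequence

variable {a : ℕ → ℝ}

lemma pow_succ_le_of_log_convex (h0 : ∀ n, 0 ≤ a n)
    (h : ∀ n, a (n + 1) ^ 2 ≤ a n * a (n + 2)) (n : ℕ) :
    a n ^ (n + 1) ≤ a 0 * a (n + 1) ^ n := by
  induction n with
  | zero => simp
  | succ n ih =>
    rcases (h0 (n + 1)).eq_or_lt with hz | hpos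
    · rw [← hz, zero_pow (by omega)]
      exact mul_nonneg (h0 0) (pow_nonneg (h0 _) _)
    · refine le_of_mul_le_mul_right ?_ (pow_pos hpos n)
      calc a (n + 1) ^ (n + 1 + 1) * a (n + 1) ^ n = (a (n + 1) ^ 2) ^ (n + 1) := by ring
        _ ≤ (a n * a (n + 2)) ^ (n + 1) := by gcongr; exact h n
        _ = a n ^ (n + 1) * a (n + 2) ^ (n + 1) := by ring
        _ ≤ (a 0 * a (n + 1) ^ n) * a (n + 2) ^ (n + 1) := by
          gcongr
          exact pow_nonneg (h0 _) _
        _ = _ := by ring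

lemma pow_add_le_of_log_convex (h0 : ∀ n, 0 ≤ a n)
    (h : ∀ n, a (n + 1) ^ 2 ≤ a n * a (n + 2)) (l m : ℕ) :
    a l ^ (l + m) ≤ a 0 ^ m * a (l + m) ^ l := by
  induction m with
  | zero => simp
  | succ m ih =>
    rcases Nat.eq_zero_or_pos (l + m) with hz | hpos
    · obtain rfl : l = 0 := by omega
      simp
    · have hsucc := pow_succ_le_of_log_convex h0 h (l + m)
      have ha0 := h0 0
      have hal := h0 (l + m)
      refine (pow_le_pow_iff_left₀ (pow_nonneg (h0 _) _)
        (mul_nonneg (pow_nonneg ha0 _) (pow_nonneg (h0 _) _)) hpos.ne').1 ?_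
      calc (a l ^ (l + (m + 1))) ^ (l + m) = (a l ^ (l + m)) ^ (l + m + 1) := by ring
        _ ≤ (a 0 ^ m * a (l + m) ^ l) ^ (l + m + 1) := by
          gcongr
          exact pow_nonneg (h0 _) _
        _ = a 0 ^ (m * (l + m + 1)) * (a (l + m) ^ (l + m + 1)) ^ l := by ring
        _ ≤ a 0 ^ (m * (l + m + 1)) * (a 0 * a (l + m + 1) ^ (l + m)) ^ l := by gcongr
        _ = _ := by ring_nf

end LogConvexSequence

/-- The squared `L²` norm over `[0, P]` of the `n`-th derivative, for functions of period `P`. -/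
noncomputable def derivEnergy (P : ℝ) (n : ℕ) (f : ℝ → ℝ) : ℝ :=
  ∫ x in 0..P, iteratedDeriv n f x ^ 2

section DerivEnergy

variable {f : ℝ → ℝ} {P : ℝ}

lemma derivEnergy_nonneg (hP : 0 ≤ P) (n : ℕ) (f : ℝ → ℝ) : 0 ≤ derivEnergy P n f :=
  intervalIntegral.integral_nonneg hP fun _ _ => sq_nonneg _

lemma derivEnergy_one (P : ℝ) (f : ℝ → ℝ) :
    derivEnergy P 1 f = ∫ x in 0..P, deriv f x ^ 2 := by
  simp only [derivEnergy, iteratedDeriv_one]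

lemma derivEnergy_two (P : ℝ) (f : ℝ → ℝ) :
    derivEnergy P 2 f = ∫ x in 0..P, deriv (deriv f) x ^ 2 := by
  simp only [derivEnergy, iteratedDeriv_succ, iteratedDeriv_zero]

lemma derivEnergy_le_of_abs_le (hP : 0 ≤ P) (hf : ContDiff ℝ (⊤ : ℕ∞) f) {n : ℕ} {Y : ℝ}
    (h : ∀ x, |iteratedDeriv n f x| ≤ Y) : derivEnergy P n f ≤ P * Y ^ 2 := by
  have hmono : derivEnergy P n f ≤ ∫ _ in 0..P, Y ^ 2 :=
    intervalIntegral.integral_mono_on hP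
      (((contDiff_iteratedDeriv hf n).continuous.pow 2).intervalIntegrable _ _) (by simp)
      fun x _ => sq_le_sq' (abs_le.1 (h x)).1 (abs_le.1 (h x)).2
  simpa using hmono

lemma derivEnergy_sq_le (hP : 0 ≤ P) (hf : ContDiff ℝ (⊤ : ℕ∞) f)
    (hper : Function.Periodic f P) (n : ℕ) :
    derivEnergy P (n + 1) f ^ 2 ≤ derivEnergy P n f * derivEnergy P (n + 2) f := by
  have hsmooth := contDiff_iteratedDeriv hf
  have hparts : derivEnergy P (n + 1) f =
      -∫ x in 0..P, iteratedDeriv n f x * iteratedDeriv (n + 2) f x := by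
    have := integral_mul_deriv_of_periodic ((hsmooth n).of_le (mod_cast le_top))
      ((hsmooth (n + 1)).of_le (mod_cast le_top)) (periodic_iteratedDeriv hper n)
      (periodic_iteratedDeriv hper (n + 1))
    simp only [← iteratedDeriv_succ] at this
    rw [this, neg_neg]
    simp only [derivEnergy, sq]
  rw [hparts, neg_sq]
  exact sq_integral_mul_le (hsmooth n).continuous (hsmooth (n + 2)).continuous hP

lemma sq_iteratedDeriv_le_derivEnergy (hP : 0 < P) (hf : ContDiff ℝ (⊤ : ℕ∞) f)
    (hper : Function.Periodic f P) (l : ℕ) (x : ℝ) :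
    iteratedDeriv (l + 1) f x ^ 2 ≤ P * derivEnergy P (l + 2) f := by
  simpa only [derivEnergy, iteratedDeriv_succ] using deriv_sq_le_integral_deriv_deriv_sq
    ((contDiff_iteratedDeriv hf l).of_le (WithTop.coe_le_coe.2 le_top)) hP
    (periodic_iteratedDeriv hper l) x

theorem sq_iteratedDeriv_pow_le (hP : 0 < P) (hf : ContDiff ℝ (⊤ : ℕ∞) f)
    (hper : Function.Periodic f P) {l : ℕ} (hl : 1 ≤ l) (m : ℕ) (x : ℝ) :
    (iteratedDeriv l f x ^ 2) ^ (l + m) ≤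
      P ^ (l + m) * (derivEnergy P 1 f ^ m * derivEnergy P (l + m + 1) f ^ l) := by
  obtain ⟨l, rfl⟩ := Nat.exists_eq_add_of_le' hl
  calc (iteratedDeriv (l + 1) f x ^ 2) ^ (l + 1 + m)
      ≤ (P * derivEnergy P (l + 1 + 1) f) ^ (l + 1 + m) := by
        gcongr
        exact sq_iteratedDeriv_le_derivEnergy hP hf hper l x
    _ = P ^ (l + 1 + m) * derivEnergy P (l + 1 + 1) f ^ (l + 1 + m) := mul_pow _ _ _
    _ ≤ _ := by
        gcongr
        exact pow_add_le_of_log_convex (a := fun n => derivEnergy P (n + 1) f)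
          (fun n => derivEnergy_nonneg hP.le _ f) (fun n => derivEnergy_sq_le hP.le hf hper _)
          (l + 1) m

end DerivEnergy

section FourierCoefficients

variable {f f' : ℝ → ℂ} {a b : ℝ}

lemma fourierCoeffOn_sub_of_continuous (hab : a < b) {g : ℝ → ℂ} (hf : Continuous f)
    (hg : Continuous g) (n : ℤ) : fourierCoeffOn hab (fun x => f x - g x) n =
      fourierCoeffOn hab f n - fourierCoeffOn hab g n := by
  have hint : ∀ {u : ℝ → ℂ}, Continuous u → IntervalIntegrable
      (fun x : ℝ => fourier (-n) (x : AddCircle (b - a)) • u x) MeasureTheory.volume a b :=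
    fun hu => (((map_continuous (fourier (-n))).comp (AddCircle.continuous_mk' _)).smul
      hu).intervalIntegrable _ _
  simp only [fourierCoeffOn_eq_integral, smul_sub]
  rw [intervalIntegral.integral_sub (hint hf) (hint hg), smul_sub]

lemma fourierCoeffOn_deriv_of_eq (hab : a < b) (hf : ∀ x, HasDerivAt f (f' x) x)
    (hf' : Continuous f') (hfab : f b = f a) (n : ℤ) :
    fourierCoeffOn hab f' n = 2 * π * Complex.I * n / (b - a : ℝ) * fourierCoeffOn hab f n := by
  have hba : ((b - a : ℝ) : ℂ) ≠ 0 := by exact_mod_cast (sub_pos.2 hab).ne'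
  rcases eq_or_ne n 0 with rfl | hn
  · rw [fourierCoeffOn_eq_integral]
    simp only [neg_zero, fourier_zero, one_smul]
    rw [intervalIntegral.integral_eq_sub_of_hasDerivAt (fun x _ => hf x)
      (hf'.intervalIntegrable _ _), hfab]
    simp
  · have hn' : (n : ℂ) ≠ 0 := by exact_mod_cast hn
    have hpi : (π : ℂ) ≠ 0 := by exact_mod_cast pi_ne_zero
    rw [fourierCoeffOn_of_hasDerivAt hab hn (fun x _ => hf x) (hf'.intervalIntegrable _ _), hfab]
    push_cast at hba ⊢
    field_simp
    ring

lemma hasSum_sq_fourierCoeffOn_of_continuous (hab : a < b) (hf : Continuous f) :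
    HasSum (fun n => ‖fourierCoeffOn hab f n‖ ^ 2) ((b - a)⁻¹ * ∫ x in a..b, ‖f x‖ ^ 2) := by
  obtain ⟨C, hC⟩ := isCompact_Icc.exists_bound_of_continuousOn (s := Icc a b) hf.continuousOn
  refine hasSum_sq_fourierCoeffOn hab
    (MeasureTheory.MemLp.of_bound hf.aestronglyMeasurable C ?_)
  filter_upwards [MeasureTheory.ae_restrict_mem measurableSet_Ioc] with x hx
  exact hC x (Ioc_subset_Icc_self hx)

lemma norm_sq_fourierCoeffOn_deriv (hf : ∀ x, HasDerivAt f (f' x) x) (hf' : Continuous f')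
    (hper : f (2 * π) = f 0) (n : ℤ) : ‖fourierCoeffOn two_pi_pos f' n‖ ^ 2 =
      n ^ 2 * ‖fourierCoeffOn two_pi_pos f n‖ ^ 2 := by
  have hpi : (π : ℂ) ≠ 0 := by exact_mod_cast pi_ne_zero
  have hfactor : 2 * π * Complex.I * n / (2 * π - 0 : ℝ) = Complex.I * n := by
    push_cast
    field_simp
    ring
  rw [fourierCoeffOn_deriv_of_eq two_pi_pos hf hf' hper, hfactor, norm_mul, norm_mul,
    Complex.norm_I, one_mul, Complex.norm_intCast, mul_pow, sq_abs]

/-- Wirtinger's inequality with the constant of the `N`-th eigenvalue, up to the lower modes. -/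
theorem sq_mul_integral_norm_sq_le (hf : ∀ x, HasDerivAt f (f' x) x) (hf' : Continuous f')
    (hper : f (2 * π) = f 0) (N : ℕ) :
    N ^ 2 * ∫ x in 0..2 * π, ‖f x‖ ^ 2 ≤ (∫ x in 0..2 * π, ‖f' x‖ ^ 2) +
      2 * π * ∑ n ∈ Finset.Ioo (-N : ℤ) N, (N ^ 2 - n ^ 2 : ℝ) *
        ‖fourierCoeffOn two_pi_pos f n‖ ^ 2 := by
  have hfc : Continuous f := continuous_iff_continuousAt.2 fun x => (hf x).continuousAt
  have hsum := (hasSum_sq_fourierCoeffOn_of_continuous two_pi_pos hf').sub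
    ((hasSum_sq_fourierCoeffOn_of_continuous two_pi_pos hfc).mul_left ((N : ℝ) ^ 2))
  simp only [norm_sq_fourierCoeffOn_deriv hf hf' hper, ← sub_mul, sub_zero] at hsum
  have hle := sum_le_hasSum (Finset.Ioo (-N : ℤ) N) (fun n hn => ?_) hsum
  · have hneg : ∑ n ∈ Finset.Ioo (-N : ℤ) N, (N ^ 2 - n ^ 2 : ℝ) *
        ‖fourierCoeffOn two_pi_pos f n‖ ^ 2 = -∑ n ∈ Finset.Ioo (-N : ℤ) N, (n ^ 2 - N ^ 2 : ℝ) *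
        ‖fourierCoeffOn two_pi_pos f n‖ ^ 2 := by
      rw [← Finset.sum_neg_distrib]
      exact Finset.sum_congr rfl fun n _ => by ring
    have hmul := mul_le_mul_of_nonneg_left hle two_pi_pos.le
    rw [mul_sub, mul_left_comm _ ((N : ℝ) ^ 2), mul_inv_cancel_left₀ two_pi_pos.ne',
      mul_inv_cancel_left₀ two_pi_pos.ne'] at hmul
    rw [hneg]
    linarith
  · have hNn : (N : ℤ) ^ 2 ≤ n ^ 2 := by
      rw [← sq_abs n]
      gcongr
      by_contra! hlt
      exact hn (Finset.mem_Ioo.2 (abs_lt.1 hlt))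
    exact mul_nonneg (sub_nonneg.2 (by exact_mod_cast hNn)) (sq_nonneg _)

end FourierCoefficients

section SpectralGap

variable {f : ℝ → ℝ}

lemma fourierCoeffOn_one_neg_one_eq_zero {g : ℝ → ℝ} (hg : Continuous g)
    (hcos : ∫ x in 0..2 * π, cos x * g x = 0) (hsin : ∫ x in 0..2 * π, sin x * g x = 0)
    {n : ℤ} (hn : n = 1 ∨ n = -1) : fourierCoeffOn two_pi_pos (fun x => (g x : ℂ)) n = 0 := by
  have hpt : ∀ x : ℝ, (fourier (-n)) (x : AddCircle (2 * π - 0)) • (g x : ℂ) =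
      ((cos x * g x : ℝ) : ℂ) - n * Complex.I * ((sin x * g x : ℝ) : ℂ) := by
    intro x
    have hpi : (π : ℂ) ≠ 0 := by exact_mod_cast pi_ne_zero
    have harg : 2 * (π : ℂ) * Complex.I * ((-n : ℤ) : ℂ) * x / ((2 * π - 0 : ℝ) : ℂ) =
        (-(n : ℝ) * x : ℝ) * Complex.I := by
      push_cast
      field_simp
      ring
    rw [fourier_coe_apply, smul_eq_mul, harg, Complex.exp_mul_I, ← Complex.ofReal_cos,
      ← Complex.ofReal_sin]
    rcases hn with rfl | rfl <;> simp <;> ring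
  rw [fourierCoeffOn_eq_integral]
  simp only [hpt]
  rw [intervalIntegral.integral_sub, intervalIntegral.integral_const_mul,
    intervalIntegral.integral_ofReal, intervalIntegral.integral_ofReal, hcos, hsin]
  · simp
  all_goals exact Continuous.intervalIntegrable (by fun_prop) _ _

lemma sum_sq_fourierCoeffOn_le {g : ℝ → ℂ} (hg : Continuous g) (s : Finset ℤ) :
    2 * π * ∑ n ∈ s, ‖fourierCoeffOn two_pi_pos g n‖ ^ 2 ≤ ∫ x in 0..2 * π, ‖g x‖ ^ 2 := by
  have hle := sum_le_hasSum s (fun n _ => sq_nonneg _)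
    (hasSum_sq_fourierCoeffOn_of_continuous two_pi_pos hg)
  rwa [sub_zero, ← div_eq_inv_mul, le_div_iff₀' two_pi_pos] at hle

lemma fourierCoeffOn_sub_eq {g h h' : ℝ → ℝ} (hg : Continuous g)
    (hh : ∀ x, HasDerivAt h (h' x) x) (hh' : Continuous h') (hper : Function.Periodic h (2 * π))
    (hcos : ∫ x in 0..2 * π, cos x * h x = 0) (hsin : ∫ x in 0..2 * π, sin x * h x = 0)
    {n : ℤ} (hn : n = 1 ∨ n = -1) :
    fourierCoeffOn two_pi_pos (fun x => ((g x - h' x : ℝ) : ℂ)) n =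
      fourierCoeffOn two_pi_pos (fun x => (g x : ℂ)) n := by
  have hhc : Continuous h := continuous_iff_continuousAt.2 fun x => (hh x).continuousAt
  have hzero := fourierCoeffOn_deriv_of_eq two_pi_pos (fun x => (hh x).ofReal_comp)
    (Complex.continuous_ofReal.comp hh') (congrArg _ hper.eq) n
  rw [fourierCoeffOn_one_neg_one_eq_zero hhc hcos hsin hn, mul_zero] at hzero
  simp only [Complex.ofReal_sub]
  rw [fourierCoeffOn_sub_of_continuous two_pi_pos (by fun_prop) (by fun_prop), hzero, sub_zero]

lemma sum_low_modes_deriv_le {h h' : ℝ → ℝ} (hf : ContDiff ℝ 1 f)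
    (hper : Function.Periodic f (2 * π)) (hh : ∀ x, HasDerivAt h (h' x) x) (hh' : Continuous h')
    (hhper : Function.Periodic h (2 * π)) (hcos : ∫ x in 0..2 * π, cos x * h x = 0)
    (hsin : ∫ x in 0..2 * π, sin x * h x = 0) :
    2 * π * ∑ n ∈ Finset.Ioo (-2 : ℤ) 2,
        (2 ^ 2 - n ^ 2 : ℝ) * ‖fourierCoeffOn two_pi_pos (fun x => ((deriv f x : ℝ) : ℂ)) n‖ ^ 2 ≤
      3 * ∫ x in 0..2 * π, (deriv f x - h' x) ^ 2 := by
  have hdf := hf.continuous_deriv_one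
  have hmode : ∀ n ∈ Finset.Ioo (-2 : ℤ) 2,
      (2 ^ 2 - n ^ 2 : ℝ) * ‖fourierCoeffOn two_pi_pos (fun x => ((deriv f x : ℝ) : ℂ)) n‖ ^ 2 ≤
        3 * ‖fourierCoeffOn two_pi_pos (fun x => ((deriv f x - h' x : ℝ) : ℂ)) n‖ ^ 2 := by
    intro n hn
    rcases eq_or_ne n 0 with rfl | hn0
    · rw [norm_sq_fourierCoeffOn_deriv
        (fun x => (hf.differentiable one_ne_zero x).hasDerivAt.ofReal_comp)
        (Complex.continuous_ofReal.comp hdf) (congrArg _ hper.eq)]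
      simp
    · have hn1 : n = 1 ∨ n = -1 := by
        rw [Finset.mem_Ioo] at hn
        omega
      rw [fourierCoeffOn_sub_eq hdf hh hh' hhper hcos hsin hn1]
      gcongr
      rcases hn1 with rfl | rfl <;> norm_num
  have hsum := mul_le_mul_of_nonneg_left (Finset.sum_le_sum hmode) two_pi_pos.le
  have hbessel := sum_sq_fourierCoeffOn_le
    (g := fun x => ((deriv f x - h' x : ℝ) : ℂ)) (by fun_prop) (Finset.Ioo (-2 : ℤ) 2)
  simp only [Complex.norm_real, Real.norm_eq_abs, sq_abs] at hbessel
  rw [← Finset.mul_sum] at hsum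
  linarith

/-- If `h` has no first Fourier modes and `h'` is close to `f'`, then `f'` almost has no first
Fourier modes, and Wirtinger's inequality holds for `f'` with almost the second eigenvalue. -/
theorem mul_derivEnergy_one_le_derivEnergy_two {h h' : ℝ → ℝ} {η : ℝ} (hf : ContDiff ℝ 2 f)
    (hper : Function.Periodic f (2 * π)) (hh : ∀ x, HasDerivAt h (h' x) x) (hh' : Continuous h')
    (hhper : Function.Periodic h (2 * π)) (hcos : ∫ x in 0..2 * π, cos x * h x = 0)
    (hsin : ∫ x in 0..2 * π, sin x * h x = 0)
    (hclose : ∀ x, |deriv f x - h' x| ≤ η * |deriv f x|) :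
    (4 - 3 * η ^ 2) * derivEnergy (2 * π) 1 f ≤ derivEnergy (2 * π) 2 f := by
  have hdf : ContDiff ℝ 1 (deriv f) := hf.deriv'
  have hclose_sq : ∫ x in 0..2 * π, (deriv f x - h' x) ^ 2 ≤ η ^ 2 * derivEnergy (2 * π) 1 f := by
    rw [derivEnergy_one, ← intervalIntegral.integral_const_mul]
    refine intervalIntegral.integral_mono_on two_pi_pos.le
      (((hdf.continuous.sub hh').pow 2).intervalIntegrable _ _)
      ((continuous_const.mul (hdf.continuous.pow 2)).intervalIntegrable _ _) fun x _ => ?_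
    rw [← sq_abs, ← sq_abs (deriv f x), ← mul_pow]
    exact pow_le_pow_left₀ (abs_nonneg _) (hclose x) 2
  have hgap := sq_mul_integral_norm_sq_le
    (fun x => (hdf.differentiable one_ne_zero x).hasDerivAt.ofReal_comp)
    (Complex.continuous_ofReal.comp hdf.continuous_deriv_one)
    (congrArg _ (periodic_deriv hper).eq) 2
  simp only [Complex.norm_real, Real.norm_eq_abs, sq_abs, Nat.cast_ofNat] at hgap
  rw [← derivEnergy_two, ← derivEnergy_one] at hgap
  linarith [sum_low_modes_deriv_le (hf.of_le one_le_two) hper hh hh' hhper hcos hsin]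

end SpectralGap

section Dissipation

variable {a b f : ℝ → ℝ} {K : Set ℝ} {P lam mu : ℝ}

lemma contDiff_quasilinear (ha : ∀ y ∈ K, ContDiffAt ℝ (⊤ : ℕ∞) a y)
    (hb : ∀ y ∈ K, ContDiffAt ℝ (⊤ : ℕ∞) b y) (hf : ContDiff ℝ (⊤ : ℕ∞) f)
    (hfK : ∀ x, f x ∈ K) : ContDiff ℝ (⊤ : ℕ∞) (quasilinear a b f) :=
  ((contDiff_comp_of_forall_mem ha hf hfK).mul
    (contDiff_infty_iff_deriv.1 (contDiff_infty_iff_deriv.1 hf).2).2).add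
      (contDiff_comp_of_forall_mem hb hf hfK)

lemma periodic_quasilinear (hper : Function.Periodic f P) :
    Function.Periodic (quasilinear a b f) P := fun x => by
  simp only [quasilinear, hper x, periodic_deriv (periodic_deriv hper) x]

lemma integral_deriv_mul_deriv_quasilinear (ha : ∀ y ∈ K, ContDiffAt ℝ (⊤ : ℕ∞) a y)
    (hb : ∀ y ∈ K, ContDiffAt ℝ (⊤ : ℕ∞) b y) (hf : ContDiff ℝ (⊤ : ℕ∞) f)
    (hper : Function.Periodic f P) (hfK : ∀ x, f x ∈ K) :
    ∫ x in 0..P, deriv f x * deriv (quasilinear a b f) x =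
      (∫ x in 0..P, deriv b (f x) * deriv f x ^ 2) -
        ∫ x in 0..P, a (f x) * deriv (deriv f) x ^ 2 := by
  have hf' := (contDiff_infty_iff_deriv.1 hf).2
  have hf'' := (contDiff_infty_iff_deriv.1 hf').2.continuous
  have hbf := contDiff_comp_of_forall_mem hb hf hfK
  have hbf_per : Function.Periodic (fun x => b (f x)) P := fun x => by simp only [hper x]
  have ha_cont := (contDiff_comp_of_forall_mem ha hf hfK).continuous
  have hb_cont := hbf.continuous
  have hsource : ∫ x in 0..P, b (f x) * deriv (deriv f) x =
      -∫ x in 0..P, deriv b (f x) * deriv f x ^ 2 := by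
    rw [integral_mul_deriv_of_periodic (hbf.of_le (mod_cast le_top)) (hf'.of_le (mod_cast le_top))
      hbf_per (periodic_deriv hper)]
    simp only [(hasDerivAt_comp_of_forall_mem hb hf hfK _).deriv, mul_assoc, sq]
  have hsplit : ∫ x in 0..P, deriv (deriv f) x * quasilinear a b f x =
      (∫ x in 0..P, a (f x) * deriv (deriv f) x ^ 2) +
        ∫ x in 0..P, b (f x) * deriv (deriv f) x := by
    rw [← intervalIntegral.integral_add]
    · exact intervalIntegral.integral_congr fun x _ => by simp only [quasilinear]; ring
    · exact (ha_cont.mul (hf''.pow 2)).intervalIntegrable _ _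
    · exact (hb_cont.mul hf'').intervalIntegrable _ _
  rw [integral_mul_deriv_of_periodic (hf'.of_le (mod_cast le_top))
    ((contDiff_quasilinear ha hb hf hfK).of_le (mod_cast le_top)) (periodic_deriv hper)
    (periodic_quasilinear hper), hsplit, hsource]
  ring

lemma integral_deriv_mul_deriv_quasilinear_le (hP : 0 ≤ P)
    (ha : ∀ y ∈ K, ContDiffAt ℝ (⊤ : ℕ∞) a y) (hb : ∀ y ∈ K, ContDiffAt ℝ (⊤ : ℕ∞) b y)
    (ha_le : ∀ y ∈ K, lam ≤ a y) (hb_le : ∀ y ∈ K, deriv b y ≤ mu)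
    (hf : ContDiff ℝ (⊤ : ℕ∞) f) (hper : Function.Periodic f P) (hfK : ∀ x, f x ∈ K) :
    ∫ x in 0..P, deriv f x * deriv (quasilinear a b f) x ≤
      mu * derivEnergy P 1 f - lam * derivEnergy P 2 f := by
  have hf' := (contDiff_infty_iff_deriv.1 hf).2
  have hf'_cont := hf'.continuous
  have hf'' := (contDiff_infty_iff_deriv.1 hf').2.continuous
  have ha_cont := (contDiff_comp_of_forall_mem ha hf hfK).continuous
  have hb'_cont := (contDiff_comp_of_forall_mem
    (fun y hy => (hb y hy).derivWithin (m := (⊤ : ℕ∞)) (by simp)) hf hfK).continuous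
  rw [integral_deriv_mul_deriv_quasilinear ha hb hf hper hfK, derivEnergy_one, derivEnergy_two,
    ← intervalIntegral.integral_const_mul, ← intervalIntegral.integral_const_mul]
  refine sub_le_sub (intervalIntegral.integral_mono hP ?_ ?_ fun x => ?_)
    (intervalIntegral.integral_mono hP ?_ ?_ fun x => ?_)
  · exact (hb'_cont.mul (hf'_cont.pow 2)).intervalIntegrable _ _
  · exact (continuous_const.mul (hf'_cont.pow 2)).intervalIntegrable _ _
  · exact mul_le_mul_of_nonneg_right (hb_le _ (hfK x)) (sq_nonneg _)
  · exact (continuous_const.mul (hf''.pow 2)).intervalIntegrable _ _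
  · exact (ha_cont.mul (hf''.pow 2)).intervalIntegrable _ _
  · exact mul_le_mul_of_nonneg_right (ha_le _ (hfK x)) (sq_nonneg _)

end Dissipation

lemma eventually_le_rpow_of_hasDerivAt_le {E E' : ℝ → ℝ} {T S γ : ℝ} (hTS : T < S)
    (hE : ∀ t ∈ Ioo T S, HasDerivAt E (E' t) t)
    (hE' : ∀ t ∈ Ioo T S, E' t ≤ -(γ / (S - t)) * E t) :
    ∃ C, ∀ᶠ t in 𝓝[<] S, E t ≤ C * (S - t) ^ γ := by
  set φ : ℝ → ℝ := fun t => E t * (S - t) ^ (-γ) with hφ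
  have hderiv : ∀ t ∈ Ioo T S,
      HasDerivAt φ ((E' t + γ / (S - t) * E t) * (S - t) ^ (-γ)) t := by
    intro t ht
    have hSt := sub_pos.2 ht.2
    refine ((hE t ht).fun_mul (((hasDerivAt_id t).const_sub S).rpow_const
      (p := -γ) (Or.inl hSt.ne'))).congr_deriv ?_
    simp only [id]
    rw [rpow_sub_one hSt.ne']
    ring
  have hanti : AntitoneOn φ (Ioo T S) := by
    refine antitoneOn_of_deriv_nonpos (convex_Ioo T S)
      (fun t ht => (hderiv t ht).continuousAt.continuousWithinAt)
      (fun t ht => (hderiv t (interior_subset ht)).differentiableAt.differentiableWithinAt)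
      fun t ht => ?_
    have ht := interior_subset ht
    rw [(hderiv t ht).deriv]
    exact mul_nonpos_of_nonpos_of_nonneg (by linarith [hE' t ht])
      (rpow_nonneg (sub_pos.2 ht.2).le _)
  obtain ⟨T', hTT', hT'S⟩ := exists_between hTS
  refine ⟨φ T', ?_⟩
  filter_upwards [Ioo_mem_nhdsLT hT'S] with t ht
  have hle := hanti ⟨hTT', hT'S⟩ ⟨hTT'.trans ht.1, ht.2⟩ ht.1.le
  have hpos := rpow_pos_of_pos (sub_pos.2 ht.2) γ
  calc E t = φ t * (S - t) ^ γ := by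
        rw [hφ, mul_assoc, ← rpow_add (sub_pos.2 ht.2), neg_add_cancel, rpow_zero, mul_one]
    _ ≤ φ T' * (S - t) ^ γ := by gcongr

namespace QuasilinearFlow

variable {a b c : ℝ → ℝ} {K : Set ℝ} {T S : ℝ} {U : ℝ → ℝ → ℝ}

lemma hasDerivAt_derivEnergy (h : QuasilinearFlow a b c K T S U) (n : ℕ) {t : ℝ}
    (ht : t ∈ Ioo T S) :
    HasDerivAt (fun s => derivEnergy (2 * π) n (U s))
      (2 * c t * ∫ x in 0..2 * π,
        iteratedDeriv n (U t) x * iteratedDeriv n (quasilinear a b (U t)) x) t := by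
  have hsq : SmoothStrip (Ioo T S) fun s x => iteratedDeriv n (U s) x ^ 2 :=
    ContDiffOn.pow ((h.smooth.mono Ioo_subset_Ico_self).iteratedDeriv isOpen_Ioo.uniqueDiffOn n) 2
  refine (hsq.hasDerivAt_integral isOpen_Ioo
    (fun s hs x => (h.hasDerivAt_iteratedDeriv n hs x).pow 2) ht 0 (2 * π)).congr_deriv ?_
  rw [← intervalIntegral.integral_const_mul]
  exact intervalIntegral.integral_congr fun x _ => by push_cast; ring

lemma eventually_derivEnergy_one_le {c₀ lam mu nu : ℝ}
    (h : QuasilinearFlow a b (fun t => c₀ / (S - t)) K T S U) (hTS : T < S)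
    (ha : ∀ y ∈ K, ContDiffAt ℝ (⊤ : ℕ∞) a y) (hb : ∀ y ∈ K, ContDiffAt ℝ (⊤ : ℕ∞) b y)
    (hlam : 0 ≤ lam) (ha_le : ∀ y ∈ K, lam ≤ a y) (hb_le : ∀ y ∈ K, deriv b y ≤ mu)
    (hgap : ∀ t ∈ Ioo T S, nu * derivEnergy (2 * π) 1 (U t) ≤ derivEnergy (2 * π) 2 (U t)) :
    ∃ C, ∀ᶠ t in 𝓝[<] S,
      derivEnergy (2 * π) 1 (U t) ≤ C * (S - t) ^ (2 * c₀ * (lam * nu - mu)) := by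
  refine eventually_le_rpow_of_hasDerivAt_le hTS
    (fun t ht => h.hasDerivAt_derivEnergy 1 ht) fun t ht => ?_
  have ht' := Ioo_subset_Ico_self ht
  have hdiss := integral_deriv_mul_deriv_quasilinear_le two_pi_pos.le ha hb ha_le hb_le
    (h.smooth.contDiff ht') (h.periodic t ht') (h.mem t ht')
  simp only [iteratedDeriv_one]
  calc 2 * (c₀ / (S - t)) * ∫ x in 0..2 * π, deriv (U t) x * deriv (quasilinear a b (U t)) x
      ≤ 2 * (c₀ / (S - t)) *
          (mu * derivEnergy (2 * π) 1 (U t) - lam * (nu * derivEnergy (2 * π) 1 (U t))) := by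
        have hc := (h.coeff_pos t ht).le
        gcongr
        exact hdiss.trans (sub_le_sub_left (mul_le_mul_of_nonneg_left (hgap t ht) hlam) _)
    _ = -(2 * c₀ * (lam * nu - mu) / (S - t)) * derivEnergy (2 * π) 1 (U t) := by ring

end QuasilinearFlow

section Interpolation

variable {f g : ℝ → ℝ} {K : Set ℝ} {P : ℝ}

lemma le_max_one_mul_of_pow_le_mul_pow {x y A : ℝ} {n : ℕ} (hn : n ≠ 0) (hy : 0 ≤ y)
    (h : x ^ n ≤ A * y ^ n) : x ≤ max 1 A * y := by
  by_contra! hlt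
  refine (h.trans ?_).not_gt (pow_lt_pow_left₀ hlt (by positivity) hn)
  rw [mul_pow]
  gcongr
  exact (le_max_right 1 A).trans (le_self_pow₀ (le_max_left 1 A) hn)

lemma abs_iteratedDeriv_le_of_derivEnergy_le {A B γ ρ τ : ℝ} {l m : ℕ} (hP : 0 < P)
    (hf : ContDiff ℝ (⊤ : ℕ∞) f) (hper : Function.Periodic f P) (hl : 1 ≤ l)
    (hτ : 0 < τ) (hτ1 : τ ≤ 1)
    (hm : 2 * ρ * ((l + m : ℕ) : ℝ) ≤ γ * m) (h₁ : derivEnergy P 1 f ≤ A * τ ^ γ)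
    (h₂ : derivEnergy P (l + m + 1) f ≤ B) (x : ℝ) :
    |iteratedDeriv l f x| ≤ max 1 (P ^ (l + m) * (A ^ m * B ^ l)) * τ ^ ρ := by
  have hexp : (τ ^ γ) ^ m ≤ (τ ^ ρ) ^ (2 * (l + m)) := by
    rw [← rpow_natCast, ← rpow_mul hτ.le, ← rpow_natCast, ← rpow_mul hτ.le]
    refine rpow_le_rpow_of_exponent_ge hτ hτ1 (le_trans (le_of_eq ?_) hm)
    push_cast
    ring
  refine le_max_one_mul_of_pow_le_mul_pow (n := 2 * (l + m)) (by omega) (rpow_nonneg hτ.le ρ) ?_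
  have hE₁ := derivEnergy_nonneg hP.le 1 f
  have hE₂ := derivEnergy_nonneg hP.le (l + m + 1) f
  have hA : 0 ≤ A := nonneg_of_mul_nonneg_left (hE₁.trans h₁) (rpow_pos_of_pos hτ γ)
  have hB : 0 ≤ B := hE₂.trans h₂
  calc |iteratedDeriv l f x| ^ (2 * (l + m))
      = (iteratedDeriv l f x ^ 2) ^ (l + m) := by rw [pow_mul, sq_abs]
    _ ≤ P ^ (l + m) * (derivEnergy P 1 f ^ m * derivEnergy P (l + m + 1) f ^ l) :=
        sq_iteratedDeriv_pow_le hP hf hper hl m x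
    _ ≤ P ^ (l + m) * ((A * τ ^ γ) ^ m * B ^ l) := by gcongr
    _ = P ^ (l + m) * (A ^ m * B ^ l) * (τ ^ γ) ^ m := by ring
    _ ≤ P ^ (l + m) * (A ^ m * B ^ l) * (τ ^ ρ) ^ (2 * (l + m)) := by gcongr

lemma derivEnergy_one_comp_le {M : ℝ} (hP : 0 ≤ P) (hg : ∀ y ∈ K, ContDiffAt ℝ (⊤ : ℕ∞) g y)
    (hM : ∀ y ∈ K, |deriv g y| ≤ M) (hf : ContDiff ℝ (⊤ : ℕ∞) f) (hfK : ∀ x, f x ∈ K) :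
    derivEnergy P 1 (fun x => g (f x)) ≤ M ^ 2 * derivEnergy P 1 f := by
  rw [derivEnergy_one, derivEnergy_one, ← intervalIntegral.integral_const_mul]
  have hf' := (contDiff_infty_iff_deriv.1 hf).2.continuous
  have hgf' := (contDiff_infty_iff_deriv.1 (contDiff_comp_of_forall_mem hg hf hfK)).2.continuous
  refine intervalIntegral.integral_mono hP ((hgf'.pow 2).intervalIntegrable _ _)
    ((continuous_const.mul (hf'.pow 2)).intervalIntegrable _ _) fun x => ?_
  simp only [(hasDerivAt_comp_of_forall_mem hg hf hfK x).deriv, mul_pow]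
  exact mul_le_mul_of_nonneg_right (sq_le_sq.2 ((hM _ (hfK x)).trans (le_abs_self M)))
    (sq_nonneg _)

end Interpolation

namespace QuasilinearFlow

variable {a b c g : ℝ → ℝ} {K : Set ℝ} {T S : ℝ} {U : ℝ → ℝ → ℝ}

lemma exists_abs_iteratedDeriv_comp_le (h : QuasilinearFlow a b c K T S U) (hTS : T < S)
    (hK : IsCompact K) (ha : ∀ y ∈ K, ContDiffAt ℝ (⊤ : ℕ∞) a y)
    (hb : ∀ y ∈ K, ContDiffAt ℝ (⊤ : ℕ∞) b y) (ha_pos : ∀ y ∈ K, 0 < a y)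
    (ha' : ∀ y ∈ K, 0 ≤ y * deriv a y) (hg : ∀ y ∈ K, ContDiffAt ℝ (⊤ : ℕ∞) g y) (n : ℕ) :
    ∃ Y, ∀ t ∈ Ico T S, ∀ θ, |iteratedDeriv n (fun x => g (U t x)) θ| ≤ Y := by
  obtain ⟨Y, hY⟩ := h.exists_abs_iteratedDeriv_le hTS hK ha hb ha_pos ha' n
  obtain ⟨C, hC0, hC⟩ := _root_.exists_abs_iteratedDeriv_comp_le (Y := Y) hK n hg
  refine ⟨C * (1 + Y), fun t ht θ => ?_⟩
  refine (hC (U t) (h.smooth.contDiff ht) (h.mem t ht) θ n le_rfl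
    fun i hi => hY t ht θ i hi.le).trans ?_
  gcongr
  exact hY t ht θ n le_rfl

theorem eventually_abs_iteratedDeriv_comp_le {C₀ γ ρ : ℝ} {l : ℕ}
    (h : QuasilinearFlow a b c K T S U) (hTS : T < S)
    (hK : IsCompact K) (ha : ∀ y ∈ K, ContDiffAt ℝ (⊤ : ℕ∞) a y)
    (hb : ∀ y ∈ K, ContDiffAt ℝ (⊤ : ℕ∞) b y) (ha_pos : ∀ y ∈ K, 0 < a y)
    (ha' : ∀ y ∈ K, 0 ≤ y * deriv a y) (hg : ∀ y ∈ K, ContDiffAt ℝ (⊤ : ℕ∞) g y)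
    (hE : ∀ᶠ t in 𝓝[<] S, derivEnergy (2 * π) 1 (U t) ≤ C₀ * (S - t) ^ γ)
    (hρ : 2 * ρ < γ) (hl : 1 ≤ l) :
    ∃ C, ∀ᶠ t in 𝓝[<] S, ∀ θ,
      |iteratedDeriv l (fun x => g (U t x)) θ| ≤ C * (S - t) ^ ρ := by
  obtain ⟨m, hm⟩ := exists_nat_ge (2 * ρ * l / (γ - 2 * ρ))
  have hm' : 2 * ρ * ((l + m : ℕ) : ℝ) ≤ γ * m := by
    have := (div_le_iff₀ (sub_pos.2 hρ)).1 hm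
    push_cast
    linarith
  obtain ⟨M, -, hM⟩ := exists_forall_mem_abs_le hK fun y hy =>
    (hg y hy).derivWithin (m := (⊤ : ℕ∞)) (by simp)
  obtain ⟨Y, hY⟩ := h.exists_abs_iteratedDeriv_comp_le hTS hK ha hb ha_pos ha' hg (l + m + 1)
  refine ⟨max 1 ((2 * π) ^ (l + m) * ((M ^ 2 * C₀) ^ m * (2 * π * Y ^ 2) ^ l)), ?_⟩
  filter_upwards [hE, Ioo_mem_nhdsLT hTS, Ioo_mem_nhdsLT (sub_one_lt S)] with t hEt ht ht1 θ
  have ht' := Ioo_subset_Ico_self ht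
  have hsmooth := h.smooth.contDiff ht'
  have hcomp := contDiff_comp_of_forall_mem hg hsmooth (h.mem t ht')
  refine abs_iteratedDeriv_le_of_derivEnergy_le two_pi_pos hcomp
    (fun x => by simp only [h.periodic t ht' x]) hl (sub_pos.2 ht.2) (by linarith [ht1.1]) hm' ?_
    (derivEnergy_le_of_abs_le two_pi_pos.le hcomp (hY t ht')) θ
  calc derivEnergy (2 * π) 1 (fun x => g (U t x))
      ≤ M ^ 2 * derivEnergy (2 * π) 1 (U t) :=
        derivEnergy_one_comp_le two_pi_pos.le hg hM hsmooth (h.mem t ht')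
    _ ≤ M ^ 2 * (C₀ * (S - t) ^ γ) := by gcongr
    _ = M ^ 2 * C₀ * (S - t) ^ γ := (mul_assoc ..).symm

end QuasilinearFlow

namespace SmoothStrip

variable {F : ℝ → ℝ → ℝ} {w : ℝ → ℝ} {P T S : ℝ}

lemma exists_abs_iteratedDeriv_le_on_Icc {I : Set ℝ} (hF : SmoothStrip I F)
    (hI : UniqueDiffOn ℝ I) {t₀ t₁ : ℝ} (hsub : Icc t₀ t₁ ⊆ I) (hP : 0 < P)
    (hper : ∀ t ∈ Icc t₀ t₁, Function.Periodic (F t) P) (l : ℕ)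
    (hw : ContinuousOn w (Icc t₀ t₁)) (hw_pos : ∀ t ∈ Icc t₀ t₁, 0 < w t) :
    ∃ C, ∀ t ∈ Icc t₀ t₁, ∀ θ, |_root_.iteratedDeriv l (F t) θ| ≤ C * w t := by
  have hcont : ContinuousOn (fun q : ℝ × ℝ => _root_.iteratedDeriv l (F q.2) q.1 / w q.2)
      (Icc 0 P ×ˢ Icc t₀ t₁) :=
    ((hF.iteratedDeriv hI l).continuousOn.mono (prod_mono (subset_univ _) hsub)).div
      (hw.comp continuousOn_snd fun q hq => hq.2) fun q hq => (hw_pos q.2 hq.2).ne'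
  obtain ⟨C, hC⟩ := (isCompact_Icc.prod isCompact_Icc).exists_bound_of_continuousOn hcont
  refine ⟨C, fun t ht θ => ?_⟩
  obtain ⟨x, hx, hθx⟩ := (periodic_iteratedDeriv (hper t ht) l).exists_mem_Ico₀ hP θ
  have hbound := hC (x, t) ⟨Ico_subset_Icc_self hx, ht⟩
  rwa [norm_div, Real.norm_eq_abs, Real.norm_eq_abs, abs_of_pos (hw_pos t ht),
    div_le_iff₀ (hw_pos t ht), ← hθx] at hbound

lemma exists_abs_iteratedDeriv_le_of_eventually (hF : SmoothStrip (Ico T S) F) (hP : 0 < P)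
    (hper : ∀ t ∈ Ico T S, Function.Periodic (F t) P) {l : ℕ}
    (hw : ContinuousOn w (Ico T S)) (hw_pos : ∀ t ∈ Ico T S, 0 < w t) {C₁ : ℝ}
    (hC₁ : ∀ᶠ t in 𝓝[<] S, ∀ θ, |_root_.iteratedDeriv l (F t) θ| ≤ C₁ * w t) :
    ∃ C, 0 < C ∧ ∀ t ∈ Ico T S, ∀ θ, |_root_.iteratedDeriv l (F t) θ| ≤ C * w t := by
  obtain ⟨t₁, ht₁, hlate⟩ := mem_nhdsLT_iff_exists_Ico_subset.1 hC₁
  have hsub : Icc T t₁ ⊆ Ico T S := Icc_subset_Ico_right ht₁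
  obtain ⟨C₂, hearly⟩ := hF.exists_abs_iteratedDeriv_le_on_Icc (uniqueDiffOn_Ico T S) hsub hP
    (fun t ht => hper t (hsub ht)) l (hw.mono hsub) fun t ht => hw_pos t (hsub ht)
  refine ⟨max 1 (max C₁ C₂), by positivity, fun t ht θ => ?_⟩
  have hwt := (hw_pos t ht).le
  rcases le_total t₁ t with h | h
  · exact (hlate ⟨h, ht.2⟩ θ).trans (mul_le_mul_of_nonneg_right
      ((le_max_left _ _).trans (le_max_right _ _)) hwt)
  · exact (hearly t ⟨ht.1, h⟩ θ).trans (mul_le_mul_of_nonneg_right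
      ((le_max_right _ _).trans (le_max_right _ _)) hwt)

end SmoothStrip

/-- The radius at time `t` of the round circle that shrinks to a point at time `ω`: the solution of
`R' = -R⁻ᵖ` with `R(ω) = 0`. -/
noncomputable def circleRadius (p ω t : ℝ) : ℝ := ((p + 1) * (ω - t)) ^ (1 / (p + 1))

section CircleRadius

variable {p ω t : ℝ}

lemma circleRadius_pos (hp : 0 < p) (ht : t < ω) : 0 < circleRadius p ω t :=
  rpow_pos_of_pos (mul_pos (by linarith) (sub_pos.2 ht)) _

lemma circleRadius_rpow_mul_self (hp : 0 < p) (ht : t < ω) :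
    circleRadius p ω t ^ p * circleRadius p ω t = (p + 1) * (ω - t) := by
  rw [← rpow_add_one (circleRadius_pos hp ht).ne', circleRadius,
    ← rpow_mul (mul_pos (by linarith) (sub_pos.2 ht)).le, one_div_mul_cancel (by linarith),
    rpow_one]

lemma circleRadius_eq_mul (hp : 0 < p) (ht : t < ω) :
    circleRadius p ω t = (p + 1) ^ (1 / (p + 1)) * (ω - t) ^ (1 / (p + 1)) :=
  mul_rpow (by linarith) (sub_pos.2 ht).le

lemma hasDerivAt_circleRadius (hp : 0 < p) (ht : t < ω) :
    HasDerivAt (circleRadius p ω) (-(circleRadius p ω t ^ p)⁻¹) t := by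
  have hs : (p + 1) * (ω - t) ≠ 0 := (mul_pos (by linarith) (sub_pos.2 ht)).ne'
  refine ((((hasDerivAt_id t).const_sub ω).const_mul (p + 1)).rpow_const
    (p := 1 / (p + 1)) (Or.inl hs)).congr_deriv ?_
  have hR := (circleRadius_pos hp ht).ne'
  have hRp := (rpow_pos_of_pos (circleRadius_pos hp ht) p).ne'
  simp only [id]
  rw [rpow_sub_one hs, ← circleRadius, ← circleRadius_rpow_mul_self hp ht]
  field_simp

lemma contDiffOn_circleRadius (hp : 0 < p) :
    ContDiffOn ℝ (⊤ : ℕ∞) (circleRadius p ω) (Iio ω) :=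
  ContDiffOn.rpow_const_of_ne (by fun_prop) fun _ ht =>
    (mul_pos (by linarith) (sub_pos.2 ht)).ne'

lemma tendsto_circleRadius (hp : 0 < p) :
    Tendsto (circleRadius p ω) (𝓝[<] ω) (𝓝 0) := by
  have hcont : ContinuousAt (circleRadius p ω) ω :=
    ContinuousAt.rpow_const (by fun_prop) (Or.inr (by positivity))
  have hzero : circleRadius p ω ω = 0 := by
    rw [circleRadius, sub_self, mul_zero, zero_rpow (by positivity)]
  exact hzero ▸ hcont.tendsto.mono_left nhdsWithin_le_nhds

end CircleRadius

/-- The curvature `K t θ`, as a function of time and tangent angle, of convex closed curves moving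
by the flow of normal speed `Kᵖ` on `[0, ω)`. -/
structure CurvatureFlow (p ω : ℝ) (K : ℝ → ℝ → ℝ) : Prop where
  smooth : SmoothStrip (Ico 0 ω) K
  periodic : ∀ t ∈ Ico 0 ω, Function.Periodic (K t) (2 * π)
  pos : ∀ t ∈ Ioo 0 ω, ∀ θ, 0 < K t θ
  evolution : ∀ t ∈ Ioo 0 ω, ∀ θ, HasDerivAt (fun s => K s θ)
    (K t θ ^ 2 * (deriv (deriv fun x => K t x ^ p) θ + K t θ ^ p)) t

/-- The normal speed of a curve shrinking to a point at time `ω`, rescaled so that the speed of the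
shrinking circle is `1`. -/
noncomputable def rescaledSpeed (p ω : ℝ) (K : ℝ → ℝ → ℝ) (t θ : ℝ) : ℝ :=
  (K t θ * circleRadius p ω t) ^ p

namespace CurvatureFlow

variable {p ω t : ℝ} {K : ℝ → ℝ → ℝ}

lemma of_deriv (hK : SmoothStrip (Ico 0 ω) K)
    (hper : ∀ t ∈ Ico 0 ω, Function.Periodic (K t) (2 * π)) (hpos : ∀ t ∈ Ioo 0 ω, ∀ θ, 0 < K t θ)
    (hpde : ∀ t ∈ Ioo 0 ω, ∀ θ, deriv (fun s => K s θ) t =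
      K t θ ^ 2 * (deriv (deriv fun x => K t x ^ p) θ + K t θ ^ p)) : CurvatureFlow p ω K where
  smooth := hK
  periodic := hper
  pos := hpos
  evolution t ht θ := by
    have hdiff := ((hK.mono Ioo_subset_Ico_self).hasDerivAt_time isOpen_Ioo ht θ).differentiableAt
    exact hpde t ht θ ▸ hdiff.hasDerivAt

lemma contDiff_rpow (h : CurvatureFlow p ω K) (ht : t ∈ Ioo 0 ω) (r : ℝ) :
    ContDiff ℝ (⊤ : ℕ∞) fun x => K t x ^ r :=
  (h.smooth.contDiff (Ioo_subset_Ico_self ht)).rpow_const_of_ne fun x => (h.pos t ht x).ne'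

lemma mul_circleRadius_pos (h : CurvatureFlow p ω K) (hp : 0 < p) (ht : t ∈ Ioo 0 ω) (θ : ℝ) :
    0 < K t θ * circleRadius p ω t :=
  mul_pos (h.pos t ht θ) (circleRadius_pos hp ht.2)

lemma rescaledSpeed_pos (h : CurvatureFlow p ω K) (hp : 0 < p) (ht : t ∈ Ioo 0 ω) (θ : ℝ) :
    0 < rescaledSpeed p ω K t θ :=
  rpow_pos_of_pos (h.mul_circleRadius_pos hp ht θ) p

lemma rescaledSpeed_rpow (h : CurvatureFlow p ω K) (hp : 0 < p) (ht : t ∈ Ioo 0 ω) (θ r : ℝ) :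
    rescaledSpeed p ω K t θ ^ (r / p) = (K t θ * circleRadius p ω t) ^ r := by
  rw [rescaledSpeed, ← rpow_mul (h.mul_circleRadius_pos hp ht θ).le, mul_div_cancel₀ r hp.ne']

lemma smoothStrip_rescaledSpeed (h : CurvatureFlow p ω K) (hp : 0 < p) :
    SmoothStrip (Ioo 0 ω) (rescaledSpeed p ω K) :=
  ((h.smooth.mono Ioo_subset_Ico_self : ContDiffOn ℝ _ _ _).mul
    ((contDiffOn_circleRadius hp).comp contDiffOn_snd fun _ hq => hq.2.2)).rpow_const_of_ne
      fun q hq => (h.mul_circleRadius_pos hp hq.2 q.1).ne'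

lemma periodic_rescaledSpeed (h : CurvatureFlow p ω K) (ht : t ∈ Ico 0 ω) :
    Function.Periodic (rescaledSpeed p ω K t) (2 * π) := fun θ => by
  simp only [rescaledSpeed, h.periodic t ht θ]

lemma quasilinear_rescaledSpeed (h : CurvatureFlow p ω K) (hp : 0 < p) (ht : t ∈ Ioo 0 ω)
    (θ : ℝ) :
    quasilinear (fun y => y ^ (1 + 1 / p)) (fun y => y ^ (1 + 1 / p + 1) - y)
      (rescaledSpeed p ω K t) θ =
        rescaledSpeed p ω K t θ * (K t θ * circleRadius p ω t * circleRadius p ω t ^ p *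
          (deriv (deriv fun x => K t x ^ p) θ + K t θ ^ p) - 1) := by
  have hR := circleRadius_pos hp ht.2
  have hu := h.rescaledSpeed_pos hp ht θ
  have hsplit : ∀ x, rescaledSpeed p ω K t x = circleRadius p ω t ^ p * K t x ^ p := fun x => by
    rw [rescaledSpeed, mul_rpow (h.pos t ht x).le hR.le, mul_comm]
  have hderiv : deriv (deriv (rescaledSpeed p ω K t)) θ =
      circleRadius p ω t ^ p * deriv (deriv fun x => K t x ^ p) θ := by
    rw [funext hsplit, deriv_const_mul_field', deriv_const_mul_field']
  have hroot : rescaledSpeed p ω K t θ ^ (1 / p) = K t θ * circleRadius p ω t := by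
    rw [h.rescaledSpeed_rpow hp ht, rpow_one]
  rw [quasilinear, hderiv, rpow_add_one hu.ne', rpow_add hu, rpow_one, hroot]
  linear_combination rescaledSpeed p ω K t θ * K t θ * circleRadius p ω t * hsplit θ

lemma hasDerivAt_rescaledSpeed (h : CurvatureFlow p ω K) (hp : 0 < p) (ht : t ∈ Ioo 0 ω) (θ : ℝ) :
    HasDerivAt (fun s => rescaledSpeed p ω K s θ) (p / (p + 1) / (ω - t) *
      quasilinear (fun y => y ^ (1 + 1 / p)) (fun y => y ^ (1 + 1 / p + 1) - y)
        (rescaledSpeed p ω K t) θ) t := by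
  have hK := h.pos t ht θ
  have hR := circleRadius_pos hp ht.2
  have := rpow_pos_of_pos hR p
  refine (((h.evolution t ht θ).fun_mul (hasDerivAt_circleRadius hp ht.2)).rpow_const
    (p := p) (Or.inl (mul_pos hK hR).ne')).congr_deriv ?_
  rw [h.quasilinear_rescaledSpeed hp ht, div_div, ← circleRadius_rpow_mul_self hp ht.2,
    rpow_sub_one (mul_pos hK hR).ne', ← rescaledSpeed]
  field_simp
  ring

lemma quasilinearFlow_rescaledSpeed (h : CurvatureFlow p ω K) (hp : 0 < p) {T : ℝ} (hT : 0 < T)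
    {J : Set ℝ} (hJ : ∀ t ∈ Ico T ω, ∀ θ, rescaledSpeed p ω K t θ ∈ J) :
    QuasilinearFlow (fun y => y ^ (1 + 1 / p)) (fun y => y ^ (1 + 1 / p + 1) - y)
      (fun t => p / (p + 1) / (ω - t)) J T ω (rescaledSpeed p ω K) where
  smooth := (h.smoothStrip_rescaledSpeed hp).mono fun _ ht => ⟨hT.trans_le ht.1, ht.2⟩
  periodic _ ht := h.periodic_rescaledSpeed ⟨hT.le.trans ht.1, ht.2⟩
  mem := hJ
  coeff_pos _ ht := div_pos (div_pos hp (by linarith)) (sub_pos.2 ht.2)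
  evolution _ ht θ := h.hasDerivAt_rescaledSpeed hp ⟨hT.trans ht.1, ht.2⟩ θ

end CurvatureFlow

lemma integral_mul_deriv_deriv_add_self_eq_zero {w u : ℝ → ℝ} {P : ℝ} (hw : ContDiff ℝ 2 w)
    (hwper : Function.Periodic w P) (hw'' : ∀ x, deriv (deriv w) x = -w x)
    (hu : ContDiff ℝ 2 u) (huper : Function.Periodic u P) :
    ∫ x in 0..P, w x * (deriv (deriv u) x + u x) = 0 := by
  have hu' : ContDiff ℝ 1 (deriv u) := hu.deriv'
  have hw' : ContDiff ℝ 1 (deriv w) := hw.deriv'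
  have hparts : ∫ x in 0..P, w x * deriv (deriv u) x = -∫ x in 0..P, w x * u x := by
    rw [integral_mul_deriv_of_periodic (hw.of_le one_le_two) hu' hwper (periodic_deriv huper),
      integral_mul_deriv_of_periodic hw' (hu.of_le one_le_two) (periodic_deriv hwper) huper]
    simp only [hw'', neg_mul, intervalIntegral.integral_neg, neg_neg]
  simp only [mul_add]
  rw [intervalIntegral.integral_add, hparts, neg_add_cancel]
  · exact (hw.continuous.mul hu'.continuous_deriv_one).intervalIntegrable _ _
  · exact (hw.continuous.mul hu.continuous).intervalIntegrable _ _

namespace CurvatureFlow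

variable {p ω t : ℝ} {K : ℝ → ℝ → ℝ} {w : ℝ → ℝ}

lemma hasDerivAt_integral_mul_inv (h : CurvatureFlow p ω K) (hw : ContDiff ℝ (⊤ : ℕ∞) w)
    (hwper : Function.Periodic w (2 * π)) (hw'' : ∀ x, deriv (deriv w) x = -w x)
    (ht : t ∈ Ioo 0 ω) :
    HasDerivAt (fun s => ∫ x in 0..2 * π, w x * (K s x)⁻¹) 0 t := by
  have hsmooth : SmoothStrip (Ioo 0 ω) fun s x => w x * (K s x)⁻¹ :=
    ContDiffOn.mul (hw.comp contDiff_fst).contDiffOn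
      (ContDiffOn.inv (h.smooth.mono Ioo_subset_Ico_self) fun q hq => (h.pos q.2 hq.2 q.1).ne')
  have hevol : ∀ s ∈ Ioo 0 ω, ∀ x, HasDerivAt (fun s => w x * (K s x)⁻¹)
      (-(w x * (deriv (deriv fun y => K s y ^ p) x + K s x ^ p))) s := by
    intro s hs x
    have hK := (h.pos s hs x).ne'
    refine (((h.evolution s hs x).fun_inv hK).const_mul (w x)).congr_deriv ?_
    field_simp
  refine (hsmooth.hasDerivAt_integral isOpen_Ioo hevol ht 0 (2 * π)).congr_deriv ?_
  have htwo : (2 : WithTop ℕ∞) ≤ (⊤ : ℕ∞) := WithTop.coe_le_coe.2 le_top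
  have hper := h.periodic t (Ioo_subset_Ico_self ht)
  rw [intervalIntegral.integral_neg, neg_eq_zero]
  exact integral_mul_deriv_deriv_add_self_eq_zero (hw.of_le htwo) hwper hw''
    ((h.contDiff_rpow ht p).of_le htwo) fun x => by simp only [hper x]

lemma abs_integral_mul_inv_le (h : CurvatureFlow p ω K) (hp : 0 < p) (ht : t ∈ Ioo 0 ω) {C : ℝ}
    (hC : ∀ x, |w x| ≤ C) (hK : ∀ θ, 1 / 2 ≤ K t θ * circleRadius p ω t) :
    |∫ x in 0..2 * π, w x * (K t x)⁻¹| ≤ 2 * C * (2 * π) * circleRadius p ω t := by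
  have := circleRadius_pos hp ht.2
  have hC0 := (abs_nonneg _).trans (hC 0)
  calc |∫ x in 0..2 * π, w x * (K t x)⁻¹|
      ≤ C * (2 * circleRadius p ω t) * |2 * π - 0| := by
        rw [← Real.norm_eq_abs]
        refine intervalIntegral.norm_integral_le_of_norm_le_const fun x _ => ?_
        have hKx := h.pos t ht x
        rw [norm_mul, Real.norm_eq_abs, Real.norm_eq_abs, abs_of_pos (inv_pos.2 hKx)]
        gcongr
        · exact hC x
        · rw [inv_le_iff_one_le_mul₀ hKx]
          linarith [hK x]
    _ = 2 * C * (2 * π) * circleRadius p ω t := by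
        rw [sub_zero, abs_of_pos two_pi_pos]
        ring

variable (hconv : TendstoUniformly (fun t θ => K t θ * circleRadius p ω t) (fun _ => 1)
  (𝓝[<] ω))

include hconv

/-- The integral of `w / K` does not depend on time and tends to `0` as the curve shrinks. For
`w = cos, sin` this says that the curves are closed. -/
lemma integral_mul_inv_eq_zero (h : CurvatureFlow p ω K) (hp : 0 < p)
    (hw : ContDiff ℝ (⊤ : ℕ∞) w) (hwper : Function.Periodic w (2 * π))
    (hw'' : ∀ x, deriv (deriv w) x = -w x) (ht : t ∈ Ioo 0 ω) :
    ∫ x in 0..2 * π, w x * (K t x)⁻¹ = 0 := by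
  obtain ⟨C, hC⟩ := exists_forall_abs_le_of_periodic two_pi_pos.ne' hwper hw.continuous
  have hlim := (tendsto_circleRadius (ω := ω) hp).const_mul (2 * C * (2 * π))
  rw [mul_zero] at hlim
  refine abs_nonpos_iff.1 (ge_of_tendsto hlim ?_)
  filter_upwards [Metric.tendstoUniformly_iff.1 hconv (1 / 2) one_half_pos,
    Ioo_mem_nhdsLT (ht.1.trans ht.2)] with s hs hsI
  have hderiv := fun r hr => h.hasDerivAt_integral_mul_inv hw hwper hw'' (t := r) hr
  rw [isOpen_Ioo.is_const_of_deriv_eq_zero isPreconnected_Ioo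
    (fun r hr => (hderiv r hr).differentiableAt.differentiableWithinAt)
    (fun r hr => (hderiv r hr).deriv) ht hsI]
  refine h.abs_integral_mul_inv_le hp hsI hC fun θ => ?_
  linarith [(abs_lt.1 (Real.dist_eq _ _ ▸ hs θ)).2]

lemma eventually_abs_rescaledSpeed_sub_one_le {ε : ℝ} (hε : 0 < ε) :
    ∀ᶠ t in 𝓝[<] ω, ∀ θ, |rescaledSpeed p ω K t θ - 1| ≤ ε := by
  have hcont : ContinuousAt (fun x : ℝ => x ^ p) 1 :=
    Real.continuousAt_rpow_const _ _ (Or.inl one_ne_zero)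
  obtain ⟨δ, hδ, hball⟩ := Metric.continuousAt_iff.1 hcont ε hε
  filter_upwards [Metric.tendstoUniformly_iff.1 hconv δ hδ] with t ht θ
  have hle := (hball (by simpa only [dist_comm] using ht θ)).le
  rwa [one_rpow, Real.dist_eq] at hle

lemma mul_derivEnergy_rescaledSpeed_le (h : CurvatureFlow p ω K) (hp : 0 < p) {η : ℝ}
    (ht : t ∈ Ioo 0 ω) (hη : ∀ θ, |1 - rescaledSpeed p ω K t θ ^ (-(1 + 1 / p))| ≤ η) :
    (4 - 3 * η ^ 2) * derivEnergy (2 * π) 1 (rescaledSpeed p ω K t) ≤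
      derivEnergy (2 * π) 2 (rescaledSpeed p ω K t) := by
  set u := rescaledSpeed p ω K t with hu_def
  have hu_pos : ∀ x, 0 < u x := h.rescaledSpeed_pos hp ht
  have hu : ContDiff ℝ (⊤ : ℕ∞) u := (h.smoothStrip_rescaledSpeed hp).contDiff ht
  have hu_per : Function.Periodic u (2 * π) := h.periodic_rescaledSpeed (Ioo_subset_Ico_self ht)
  have hderiv : ∀ x, HasDerivAt (fun y => -p * u y ^ (-1 / p))
      (u x ^ (-(1 + 1 / p)) * deriv u x) x := fun x => by
    refine (((hu.differentiable (by simp) x).hasDerivAt.rpow_const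
      (p := -1 / p) (Or.inl (hu_pos x).ne')).const_mul (-p)).congr_deriv ?_
    rw [show -1 / p - 1 = -(1 + 1 / p) by ring]
    field_simp
  have horth : ∀ w : ℝ → ℝ, ContDiff ℝ (⊤ : ℕ∞) w → Function.Periodic w (2 * π) →
      (∀ x, deriv (deriv w) x = -w x) →
      ∫ x in 0..2 * π, w x * (-p * u x ^ (-1 / p)) = 0 := by
    intro w hw hwper hw''
    have hscale : ∀ x, w x * (-p * u x ^ (-1 / p)) =
        -p * (circleRadius p ω t)⁻¹ * (w x * (K t x)⁻¹) := fun x => by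
      rw [hu_def, h.rescaledSpeed_rpow hp ht, rpow_neg_one, mul_inv]
      ring
    simp only [hscale]
    rw [intervalIntegral.integral_const_mul,
      integral_mul_inv_eq_zero hconv h hp hw hwper hw'' ht, mul_zero]
  refine mul_derivEnergy_one_le_derivEnergy_two (hu.of_le (WithTop.coe_le_coe.2 le_top)) hu_per
    hderiv ?_ (fun x => by simp only [hu_per x]) (horth cos contDiff_cos cos_periodic (by simp))
    (horth sin contDiff_sin sin_periodic (by simp)) fun x => ?_
  · exact (hu.continuous.rpow_const fun x => Or.inl (hu_pos x).ne').mul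
      (contDiff_infty_iff_deriv.1 hu).2.continuous
  · rw [← one_sub_mul, abs_mul]
    exact mul_le_mul_of_nonneg_right (hη x) (abs_nonneg _)

end CurvatureFlow

section RateConstants

lemma exists_lt_dissipation_rate {q β : ℝ} (hβ : β < 4 - q) :
    ∃ η ∈ Ioo (0 : ℝ) 1, β < (1 - η) * (4 - 3 * η ^ 2) - ((q + 1) * (1 + η) - 1) := by
  have hcont : Continuous fun η : ℝ => (1 - η) * (4 - 3 * η ^ 2) - ((q + 1) * (1 + η) - 1) := by
    fun_prop
  have hlt : ∀ᶠ η in 𝓝[>] (0 : ℝ),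
      β < (1 - η) * (4 - 3 * η ^ 2) - ((q + 1) * (1 + η) - 1) :=
    nhdsWithin_le_nhds (hcont.continuousAt.eventually (lt_mem_nhds (by linarith)))
  have hmem : ∀ᶠ η in 𝓝[>] (0 : ℝ), η ∈ Ioo (0 : ℝ) 1 := Ioo_mem_nhdsGT one_pos
  exact (hmem.and hlt).exists

lemma exists_Icc_abs_rpow_sub_one_le (q : ℝ) {η : ℝ} (hη : 0 < η) :
    ∃ δ > 0, ∀ y ∈ Icc (1 - δ) (1 + δ), 0 < y ∧ |y ^ q - 1| ≤ η ∧ |1 - y ^ (-q)| ≤ η := by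
  have hclose : ∀ r : ℝ, ∀ᶠ y in 𝓝 (1 : ℝ), dist (y ^ r) 1 < η := fun r => by
    have hcont := (Real.continuousAt_rpow_const 1 r (Or.inl one_ne_zero)).tendsto
    rw [one_rpow] at hcont
    exact Metric.tendsto_nhds.1 hcont η hη
  obtain ⟨δ, hδ, hball⟩ := Metric.nhds_basis_closedBall.mem_iff.1
    ((lt_mem_nhds one_pos).and ((hclose q).and (hclose (-q))))
  refine ⟨δ, hδ, fun y hy => ?_⟩
  obtain ⟨hy0, hyq, hyq'⟩ := hball (Real.closedBall_eq_Icc ▸ hy)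
  rw [dist_comm] at hyq'
  exact ⟨hy0, hyq.le, hyq'.le⟩

end RateConstants

namespace CurvatureFlow

variable {p ω r η : ℝ} {K : ℝ → ℝ → ℝ} {J : Set ℝ} {l : ℕ}
  (hconv : TendstoUniformly (fun t θ => K t θ * circleRadius p ω t) (fun _ => 1)
    (𝓝[<] ω))

include hconv

lemma exists_quasilinearFlow_rescaledSpeed (h : CurvatureFlow p ω K) (hp : 0 < p) (hω : 0 < ω)
    {δ : ℝ} (hδ : 0 < δ) :
    ∃ T ∈ Ioo 0 ω, QuasilinearFlow (fun y => y ^ (1 + 1 / p)) (fun y => y ^ (1 + 1 / p + 1) - y)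
      (fun t => p / (p + 1) / (ω - t)) (Icc (1 - δ) (1 + δ)) T ω (rescaledSpeed p ω K) := by
  obtain ⟨T, hTω, hT⟩ := mem_nhdsLT_iff_exists_Ico_subset.1
    ((eventually_abs_rescaledSpeed_sub_one_le hconv hδ).and (Ioo_mem_nhdsLT hω))
  have hT_mem : T ∈ Ioo 0 ω := (hT ⟨le_rfl, hTω⟩).2
  refine ⟨T, hT_mem, h.quasilinearFlow_rescaledSpeed hp hT_mem.1 fun t ht θ => ?_⟩
  rw [← Real.closedBall_eq_Icc, Metric.mem_closedBall, Real.dist_eq]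
  exact (hT ht).1 θ

lemma eventually_derivEnergy_rescaledSpeed_le (h : CurvatureFlow p ω K) (hp : 0 < p) {T : ℝ}
    (hT : T ∈ Ioo 0 ω)
    (hflow : QuasilinearFlow (fun y => y ^ (1 + 1 / p)) (fun y => y ^ (1 + 1 / p + 1) - y)
      (fun t => p / (p + 1) / (ω - t)) J T ω (rescaledSpeed p ω K)) (hη : η ≤ 1)
    (hJ : ∀ y ∈ J, 0 < y ∧ |y ^ (1 + 1 / p) - 1| ≤ η ∧ |1 - y ^ (-(1 + 1 / p))| ≤ η) :
    ∃ C, ∀ᶠ t in 𝓝[<] ω, derivEnergy (2 * π) 1 (rescaledSpeed p ω K t) ≤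
      C * (ω - t) ^ (2 * (p / (p + 1)) *
        ((1 - η) * (4 - 3 * η ^ 2) - ((1 + 1 / p + 1) * (1 + η) - 1))) := by
  refine hflow.eventually_derivEnergy_one_le hT.2
    (fun y hy => contDiffAt_rpow_const_of_ne (hJ y hy).1.ne')
    (fun y hy => (contDiffAt_rpow_const_of_ne (hJ y hy).1.ne').sub contDiffAt_id)
    (sub_nonneg.2 hη) (fun y hy => by linarith [(abs_le.1 (hJ y hy).2.1).1]) (fun y hy => ?_)
    fun t ht => mul_derivEnergy_rescaledSpeed_le hconv h hp ⟨hT.1.trans ht.1, ht.2⟩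
      fun θ => (hJ _ (hflow.mem t (Ioo_subset_Ico_self ht) θ)).2.2
  rw [((hasDerivAt_rpow_const (Or.inl (hJ y hy).1.ne')).fun_sub (hasDerivAt_id' y)).deriv,
    add_sub_cancel_right]
  have hle := (abs_le.1 (hJ y hy).2.1).2
  gcongr
  linarith

lemma eventually_abs_iteratedDeriv_mul_circleRadius_le (h : CurvatureFlow p ω K) (hp : 0 < p)
    (hω : 0 < ω) (hr : r < (3 * p - 1) / (p + 1)) (hl : 1 ≤ l) :
    ∃ C, ∀ᶠ t in 𝓝[<] ω, ∀ θ,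
      |iteratedDeriv l (fun x => K t x * circleRadius p ω t) θ| ≤ C * (ω - t) ^ r := by
  have hβ : r * ((p + 1) / p) < 4 - (1 + 1 / p) := by
    rw [lt_div_iff₀ (by linarith)] at hr
    rw [← mul_div_assoc, div_lt_iff₀ hp]
    linarith [show (4 - (1 + 1 / p)) * p = 3 * p - 1 by field_simp; ring]
  obtain ⟨η, hη, hrate⟩ := exists_lt_dissipation_rate hβ
  obtain ⟨δ, hδ, hJ⟩ := exists_Icc_abs_rpow_sub_one_le (1 + 1 / p) hη.1
  obtain ⟨T, hT, hflow⟩ := exists_quasilinearFlow_rescaledSpeed hconv h hp hω hδ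
  obtain ⟨C₀, hE⟩ := eventually_derivEnergy_rescaledSpeed_le hconv h hp hT hflow hη.2.le hJ
  have hsmooth : ∀ s : ℝ, ∀ y ∈ Icc (1 - δ) (1 + δ), ContDiffAt ℝ (⊤ : ℕ∞) (fun y => y ^ s) y :=
    fun s y hy => contDiffAt_rpow_const_of_ne (hJ y hy).1.ne'
  obtain ⟨C, hC⟩ := hflow.eventually_abs_iteratedDeriv_comp_le (ρ := r) hT.2 isCompact_Icc
    (hsmooth _) (fun y hy => (hsmooth _ y hy).sub contDiffAt_id)
    (fun y hy => rpow_pos_of_pos (hJ y hy).1 _)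
    (fun y hy => by
      have := (hJ y hy).1
      rw [(hasDerivAt_rpow_const (Or.inl this.ne')).deriv]
      positivity)
    (hsmooth (1 / p)) hE
    (by
      rw [mul_assoc 2]
      refine mul_lt_mul_of_pos_left ?_ two_pos
      rwa [← div_lt_iff₀' (by positivity), div_div_eq_mul_div, mul_div_assoc])
    hl
  refine ⟨C, ?_⟩
  filter_upwards [hC, Ioo_mem_nhdsLT hω] with t hCt ht
  simpa only [h.rescaledSpeed_rpow hp ht, rpow_one] using hCt

lemma eventually_abs_iteratedDeriv_le (h : CurvatureFlow p ω K) (hp : 0 < p)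
    (hω : 0 < ω) (hr : r < (3 * p - 1) / (p + 1)) (hl : 1 ≤ l) :
    ∃ C, ∀ᶠ t in 𝓝[<] ω, ∀ θ,
      |iteratedDeriv l (K t) θ| ≤ C * (ω - t) ^ (r - 1 / (p + 1)) := by
  obtain ⟨C, hC⟩ := eventually_abs_iteratedDeriv_mul_circleRadius_le hconv h hp hω hr hl
  refine ⟨C / (p + 1) ^ (1 / (p + 1)), ?_⟩
  filter_upwards [hC, self_mem_nhdsWithin] with t hCt ht θ
  have hR := circleRadius_pos hp ht
  have hbound := hCt θ
  simp only [mul_comm (K t _)] at hbound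
  rw [iteratedDeriv_const_mul_field, abs_mul, abs_of_pos hR, ← le_div_iff₀' hR] at hbound
  rwa [rpow_sub (sub_pos.2 ht), div_mul_div_comm, ← circleRadius_eq_mul hp ht]

end CurvatureFlow

theorem blow_up_rates_general_curve_shortening_general {p ω r : ℝ} (hp : 0 < p) (hω : 0 < ω)
    (hr : r < (3 * p - 1) / (p + 1)) {K : ℝ → ℝ → ℝ} (h : CurvatureFlow p ω K)
    (hconv : TendstoUniformly (fun t θ => K t θ * circleRadius p ω t) (fun _ => 1)
      (𝓝[<] ω)) {l : ℕ} (hl : 1 ≤ l) :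
    ∃ C : ℝ, 0 < C ∧ ∀ t ∈ Ico 0 ω, ∀ θ : ℝ,
      |iteratedDeriv l (K t) θ| ≤ C * (ω - t) ^ (r - 1 / (p + 1)) := by
  obtain ⟨C, hC⟩ := CurvatureFlow.eventually_abs_iteratedDeriv_le hconv h hp hω hr hl
  exact h.smooth.exists_abs_iteratedDeriv_le_of_eventually two_pi_pos h.periodic
    (ContinuousOn.rpow_const (by fun_prop) fun t ht => Or.inl (sub_pos.2 ht.2).ne')
    (fun t ht => rpow_pos_of_pos (sub_pos.2 ht.2) _) hC

/-- Main theorem: blow-up rates of the angular derivatives of the curvature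
under the general curve shortening flow with `G(x) = |x|^(p-1)`. -/
theorem blow_up_rates_general_curve_shortening
    (p ω α : ℝ) (hp : 1 ≤ p) (hω : 0 < ω) (hα0 : 0 < α) (hα1 : α < 1)
    (k : ℝ → ℝ → ℝ)
    (hsmooth : ContDiffOn ℝ (⊤ : ℕ∞) (fun q : ℝ × ℝ => k q.1 q.2) (univ ×ˢ Ico 0 ω))
    (hper : ∀ t : ℝ, Function.Periodic (fun θ => k θ t) (2 * π))
    (hpos : ∀ θ t : ℝ, t ∈ Ico (0:ℝ) ω → 0 < k θ t)
    (hpde : ∀ θ : ℝ, ∀ t ∈ Ioo (0:ℝ) ω,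
      deriv (fun s => k θ s) t =
        (k θ t) ^ 2 * (deriv (deriv (fun x => (k x t) ^ p)) θ + (k θ t) ^ p))
    (hconv : TendstoUniformly
      (fun t θ => k θ t * ((p + 1) * (ω - t)) ^ (1 / (p + 1)))
      (fun _ => 1) (nhdsWithin ω (Iio ω))) :
    ∀ l : ℕ, 1 ≤ l → ∃ C : ℝ, 0 < C ∧
      ∀ t ∈ Ico (0:ℝ) ω, ∀ θ : ℝ,
        |iteratedDeriv l (fun x => k x t) θ| ≤
          C * (ω - t) ^ (2 * α * p / (p + 1) - 1 / (p + 1)) := by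
  have hflow : CurvatureFlow p ω fun t θ => k θ t := .of_deriv hsmooth (fun t _ => hper t)
    (fun t ht θ => hpos θ t (Ioo_subset_Ico_self ht)) fun t ht θ => hpde θ t ht
  exact fun l hl => blow_up_rates_general_curve_shortening_general (by linarith) hω
    (div_lt_div_of_pos_right (by nlinarith) (by linarith)) hflow hconv hl
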